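/- arXiv:1711.04649 — 2 statements merged into one kernel-verified Lean document; each statement's English description precedes it below -/
import Mathlib

section
/- Let K be a number field and S a finite set of places of K containing all the archimedean ones. Let Q₁, Q₂, Q₃ be three distinct points in ℙ¹(K). Then the set 𝒯 = { P ∈ ℙ¹(K) : δ_𝔭(P,Q₁) = δ_𝔭(P,Q₂) = δ_𝔭(P,Q₃) for all primes 𝔭 ∉ S } is finite, with cardinality at most B(|S|) = 2^{16|S|}. -/
open NumberField IsDedekindDomain MvPolynomial
open scoped Classical nonZeroDivisors

set_option synthInstance.maxHeartbeats 1000000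
set_option maxHeartbeats 1000000

noncomputable section

/-- The projective line over `K`. -/
abbrev P1 (K : Type*) [Field K] := Projectivization K (Fin 2 → K)

variable {K : Type*} [Field K] [NumberField K]

/-- The additive `v`-adic valuation (order) of `x ∈ K`, with junk value `0` at `x = 0`,
normalized so that it is surjective onto `ℤ`. -/
def ordAt (v : HeightOneSpectrum (𝓞 K)) (x : K) : ℤ :=
  if hx : x = 0 then 0
  else - Multiplicative.toAdd (WithZero.unzero ((v.valuation K).ne_zero_iff.mpr hx))

/-- `min (v(x), v(y))` for a pair of coordinates, not both zero. -/
def minOrd (v : HeightOneSpectrum (𝓞 K)) (x y : K) : ℤ :=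
  if x = 0 then ordAt v y else if y = 0 then ordAt v x else min (ordAt v x) (ordAt v y)

/-- The `v`-adic logarithmic distance between two points of `ℙ¹(K)`:
`δ_v(P,Q) = v(x₁y₂ - x₂y₁) - min(v x₁, v y₁) - min(v x₂, v y₂)`, with value `⊤` when `P = Q`
(it is independent of the choice of homogeneous coordinates, so we compute it on the chosen
representatives). -/
def logDist (v : HeightOneSpectrum (𝓞 K)) (P Q : P1 K) : WithTop ℤ :=
  if P = Q then ⊤
  else ((ordAt v (P.rep 0 * Q.rep 1 - P.rep 1 * Q.rep 0)
        - minOrd v (P.rep 0) (P.rep 1) - minOrd v (Q.rep 0) (Q.rep 1) : ℤ) : WithTop ℤ)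

/-- An endomorphism of `ℙ¹` of degree `d` defined over `K`, given by a pair of homogeneous
forms of degree `d` with no common zero over the algebraic closure, together with the induced
self-map of `ℙ¹(K)`. -/
structure P1Map (K : Type*) [Field K] (d : ℕ) where
  toFun : P1 K → P1 K
  F : MvPolynomial (Fin 2) K
  G : MvPolynomial (Fin 2) K
  homF : F.IsHomogeneous d
  homG : G.IsHomogeneous d
  coprime : ∀ x y : AlgebraicClosure K,
    aeval ![x, y] F = 0 → aeval ![x, y] G = 0 → x = 0 ∧ y = 0
  compat : ∀ (x y : K) (hxy : ![x, y] ≠ 0)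
    (h : ![eval ![x, y] F, eval ![x, y] G] ≠ 0),
    toFun (Projectivization.mk K ![x, y] hxy) =
      Projectivization.mk K ![eval ![x, y] F, eval ![x, y] G] h

variable {d : ℕ}

/-- `φ` has good reduction at the finite place `v`: some representing pair of forms has
coefficients in the valuation ring at `v`, not all in the maximal ideal, and the reductions
of the two forms modulo `v` have no common zero in `ℙ¹` of the algebraic closure of the
residue field. -/
def GoodReductionAt (φ : P1Map K d) (v : HeightOneSpectrum (𝓞 K)) : Prop :=
  ∃ c : K, c ≠ 0 ∧
    ∃ F₀ G₀ : MvPolynomial (Fin 2) (v.valuation (K := K)).valuationSubring,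
      MvPolynomial.map ((v.valuation (K := K)).valuationSubring.subtype) F₀ = C c * φ.F ∧
      MvPolynomial.map ((v.valuation (K := K)).valuationSubring.subtype) G₀ = C c * φ.G ∧
      ((∃ m, F₀.coeff m ∉ IsLocalRing.maximalIdeal (v.valuation (K := K)).valuationSubring) ∨
        (∃ m, G₀.coeff m ∉ IsLocalRing.maximalIdeal (v.valuation (K := K)).valuationSubring)) ∧
      ∀ x y : AlgebraicClosure
          (IsLocalRing.ResidueField (v.valuation (K := K)).valuationSubring),
        eval ![x, y] (MvPolynomial.map
          ((algebraMap (IsLocalRing.ResidueField (v.valuation (K := K)).valuationSubring)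
              (AlgebraicClosure _)).comp
            (IsLocalRing.residue _)) F₀) = 0 →
        eval ![x, y] (MvPolynomial.map
          ((algebraMap (IsLocalRing.ResidueField (v.valuation (K := K)).valuationSubring)
              (AlgebraicClosure _)).comp
            (IsLocalRing.residue _)) G₀) = 0 →
        x = 0 ∧ y = 0

/-- `φ` has good reduction outside `S`, where `S` consists of all archimedean places together
with the finite places in `T`. -/
def GoodReductionOutside (φ : P1Map K d) (T : Finset (HeightOneSpectrum (𝓞 K))) : Prop :=
  ∀ v ∉ T, GoodReductionAt φ v

/-- `P` is a periodic point of `φ`. -/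
def IsPeriodicPoint (φ : P1Map K d) (P : P1 K) : Prop :=
  ∃ n, 0 < n ∧ φ.toFun^[n] P = P

/-- `P` is a preperiodic point of `φ`. -/
def IsPreperiodicPoint (φ : P1Map K d) (P : P1 K) : Prop :=
  ∃ m, IsPeriodicPoint φ (φ.toFun^[m] P)

/-- `P` is a tail point of `φ`: preperiodic but not periodic. -/
def IsTailPoint (φ : P1Map K d) (P : P1 K) : Prop :=
  IsPreperiodicPoint φ P ∧ ¬ IsPeriodicPoint φ P

/-- The set `Tail(φ,K,P)` of `K`-rational tail points of `P`: non-periodic points having `P`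
in their forward orbit. -/
def TailOf (φ : P1Map K d) (P : P1 K) : Set (P1 K) :=
  {Q | ¬ IsPeriodicPoint φ Q ∧ ∃ n, φ.toFun^[n] Q = P}

/-- `P = [a:b]` is a critical point of `φ = [F:G]`: the algebraic condition
`φ([x:y]) = φ([a:b])`, i.e. the form `G(a,b)·F(X,Y) - F(a,b)·G(X,Y)`, vanishes to order
at least `2` at `[a:b]`. -/
def IsCriticalPt (φ : P1Map K d) (P : P1 K) : Prop :=
  ∃ (a b : K) (hab : ![a, b] ≠ 0), P = Projectivization.mk K ![a, b] hab ∧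
    (C b * X 0 - C a * X 1) ^ 2 ∣
      (C (eval ![a, b] φ.G) * φ.F - C (eval ![a, b] φ.F) * φ.G)

/-- `P` belongs to a critical cycle of `φ`: it lies in the orbit of a critical periodic
point. -/
def InCriticalCycle (φ : P1Map K d) (P : P1 K) : Prop :=
  ∃ Q, IsCriticalPt φ Q ∧ IsPeriodicPoint φ Q ∧ ∃ n, φ.toFun^[n] Q = P

/-- The cardinality `|S|` of the set of places `S` consisting of all archimedean places
together with the finite places in `T`. -/
def sCard (K : Type*) [Field K] [NumberField K] (T : Finset (HeightOneSpectrum (𝓞 K))) : ℕ :=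
  T.card + Fintype.card (InfinitePlace K)

/-- `B(s) = 2^{16 s}`. -/
def Bconst (s : ℕ) : ℕ := 2 ^ (16 * s)

/-- `C(n,s) = e^{(6n)^{3n} (n s + 1 - n)}`. -/
def Cconst (n s : ℕ) : ℝ := Real.exp ((6 * n : ℝ) ^ (3 * n) * (n * s + 1 - n))

/-- `CV(d,s) = (3B(s)+13)d + 27B(s) + C(5,s) + 6C(3,s) + 32`. -/
def CVconst (d s : ℕ) : ℝ :=
  (3 * (Bconst s : ℝ) + 13) * d + 27 * (Bconst s : ℝ) + Cconst 5 s + 6 * Cconst 3 s + 32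

/-- `L₁(d,s) = (d-1)(1 + d(1 + B(s)))`. -/
def L1const (d s : ℕ) : ℕ := (d - 1) * (1 + d * (1 + Bconst s))

/-- `L₂(d,s) = max{(2(C(3,s)+2)+1)d + 1, (d-1)(1 + B(s)(B(s) + C(3,s) + 3))}`. -/
def L2const (d s : ℕ) : ℝ :=
  max ((2 * (Cconst 3 s + 2) + 1) * d + 1)
    (((d : ℝ) - 1) * (1 + (Bconst s : ℝ) * ((Bconst s : ℝ) + Cconst 3 s + 3)))

/-- `L₃(d,s) = ((1 + 3B(s))B(s) + 1)(d-1)`. -/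
def L3const (d s : ℕ) : ℕ := ((1 + 3 * Bconst s) * Bconst s + 1) * (d - 1)

/-- `L₄(d,s) = (C(3,s) + 3)(d-1)`. -/
def L4const (d s : ℕ) : ℝ := (Cconst 3 s + 3) * ((d : ℝ) - 1)

end


namespace ThreePt

section Pade
variable {F : Type*} [Field F] [CharZero F]

/-- `Res_{T=0} P / (T g)^{M+1}`. -/
noncomputable def rs (g : PowerSeries F) (M : ℕ) (P : PowerSeries F) : F := PowerSeries.coeff M (P * g⁻¹ ^ (M + 1))

lemma rs_add (g : PowerSeries F) (M : ℕ) (P P' : PowerSeries F) : rs g M (P + P') = rs g M P + rs g M P' := by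
  simp [rs, add_mul]

lemma rs_C_mul (g : PowerSeries F) (M : ℕ) (c : F) (P : PowerSeries F) : rs g M (PowerSeries.C c * P) = c * rs g M P := by
  simp [rs, mul_assoc]

lemma rs_mul_Q (g : PowerSeries F) (hg : PowerSeries.constantCoeff g ≠ 0) (M : ℕ) (P : PowerSeries F) :
    rs g (M + 1) (P * (PowerSeries.X * g)) = rs g M P := by
  have h : g * g⁻¹ = 1 := PowerSeries.mul_inv_cancel g hg
  have : P * (PowerSeries.X * g) * g⁻¹ ^ (M + 1 + 1) = PowerSeries.X * (P * g⁻¹ ^ (M + 1)) := by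
    calc P * (PowerSeries.X * g) * g⁻¹ ^ (M + 1 + 1) = PowerSeries.X * (P * g⁻¹ ^ (M + 1)) * (g * g⁻¹) := by ring
      _ = _ := by rw [h, mul_one]
  rw [rs, this, PowerSeries.coeff_succ_X_mul, rs]

lemma rs_deriv (g : PowerSeries F) (hg : PowerSeries.constantCoeff g ≠ 0) (M : ℕ) (P : PowerSeries F) :
    rs g (M + 1) (P * PowerSeries.derivative F (PowerSeries.X * g)) = rs g M (PowerSeries.C ((M + 1 : F)⁻¹) * PowerSeries.derivative F P) := by
  have h : g * g⁻¹ = 1 := PowerSeries.mul_inv_cancel g hg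
  have hM : (M + 1 : F) ≠ 0 := by exact_mod_cast Nat.succ_ne_zero M
  have key : PowerSeries.coeff (M + 1) (PowerSeries.X * PowerSeries.derivative F (P * g⁻¹ ^ (M + 1))) =
      (M + 1 : F) * PowerSeries.coeff (M + 1) (P * g⁻¹ ^ (M + 1)) := by
    rw [PowerSeries.coeff_succ_X_mul, PowerSeries.coeff_derivative]; push_cast; ring
  have e1 : PowerSeries.X * PowerSeries.derivative F (P * g⁻¹ ^ (M + 1)) - PowerSeries.C (M + 1 : F) * (P * g⁻¹ ^ (M + 1)) =
      (PowerSeries.derivative F P * (PowerSeries.X * g) - PowerSeries.C (M + 1 : F) * (P * PowerSeries.derivative F (PowerSeries.X * g))) * g⁻¹ ^ (M + 1 + 1) := by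
    have hC : (PowerSeries.C (M + 1 : F) : PowerSeries F) = (M + 1 : PowerSeries F) := by simp
    have h2 : g⁻¹ ^ (M + 1) = g * g⁻¹ ^ (M + 1 + 1) := by
      rw [pow_succ g⁻¹ (M+1)]
      linear_combination (-g⁻¹ ^ (M + 1)) * h
    simp only [Derivation.leibniz, PowerSeries.derivative_pow, PowerSeries.derivative_inv', smul_eq_mul, PowerSeries.derivative_X, hC]
    simp only [Nat.cast_add, Nat.cast_one, Nat.add_sub_cancel]
    rw [h2]
    have h3 : g⁻¹ ^ M = g ^ 2 * g⁻¹ ^ (M + 2) := by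
      have : g ^ 2 * g⁻¹ ^ (M + 2) = g⁻¹ ^ M * (g * g⁻¹) ^ 2 := by ring
      rw [this, h]; ring
    have h4 : g⁻¹ ^ M * (g⁻¹ ^ 2) = g⁻¹ ^ (M + 2) := by ring
    linear_combination (-PowerSeries.X * P * ((M:PowerSeries F) + 1) * PowerSeries.derivative F g) * h4
  have e2 := congrArg (PowerSeries.coeff (M + 1)) e1
  rw [map_sub, key, PowerSeries.coeff_C_mul, sub_self] at e2
  have e3 : rs g (M + 1) (PowerSeries.derivative F P * (PowerSeries.X * g)) =
      (M + 1 : F) * rs g (M + 1) (P * PowerSeries.derivative F (PowerSeries.X * g)) := by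
    rw [sub_mul, map_sub, mul_assoc (PowerSeries.C _), PowerSeries.coeff_C_mul] at e2
    exact (sub_eq_zero.mp e2.symm)
  rw [rs_C_mul, ← rs_mul_Q g hg M, e3]
  field_simp

lemma rs_rec (g : PowerSeries F) (hg : PowerSeries.constantCoeff g ≠ 0) (e f r : F)
    (hQ : (PowerSeries.X + PowerSeries.C r) ^ 3 - PowerSeries.C e * (PowerSeries.X + PowerSeries.C r) ^ 2 + PowerSeries.C f * (PowerSeries.X + PowerSeries.C r) = PowerSeries.X * g) (M : ℕ) :
    (f ^ 2 * (e ^ 2 - 4 * f)) * rs g (M + 1) 1 =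
      (4 * e ^ 3 - 15 * e * f - e * (2 * e ^ 2 - 7 * f) * (M + 1 : F)⁻¹) * rs g M 1
        + (e ^ 2 - 3 * f) * (4 * (M + 1 : F)⁻¹ - 6) * rs g M (PowerSeries.X + PowerSeries.C r) ∧
    (f ^ 2 * (e ^ 2 - 4 * f)) * rs g (M + 1) (PowerSeries.X + PowerSeries.C r) =
      (2 * e ^ 2 * f - 6 * f ^ 2 - f * (e ^ 2 - 2 * f) * (M + 1 : F)⁻¹) * rs g M 1
        + e * f * (2 * (M + 1 : F)⁻¹ - 3) * rs g M (PowerSeries.X + PowerSeries.C r) := by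
  have hQ' : PowerSeries.derivative F (PowerSeries.X * g) = 3 * (PowerSeries.X + PowerSeries.C r) ^ 2 - PowerSeries.C (2 * e) * (PowerSeries.X + PowerSeries.C r) + PowerSeries.C f := by
    rw [← hQ]
    have h2 : (PowerSeries.C (2 * e) : PowerSeries F) = 2 * PowerSeries.C e := by rw [map_mul]; rfl
    simp only [map_add, map_sub, Derivation.leibniz, PowerSeries.derivative_pow, smul_eq_mul, PowerSeries.derivative_X, PowerSeries.derivative_C, h2]
    push_cast; ring
  have main : ∀ (u0 u1 u2 v0 v1 l0 l1 : F),
      PowerSeries.C l0 + PowerSeries.C l1 * (PowerSeries.X + PowerSeries.C r) = (PowerSeries.C u0 + PowerSeries.C u1 * (PowerSeries.X + PowerSeries.C r) + PowerSeries.C u2 * (PowerSeries.X + PowerSeries.C r) ^ 2) *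
        (3 * (PowerSeries.X + PowerSeries.C r) ^ 2 - PowerSeries.C (2 * e) * (PowerSeries.X + PowerSeries.C r) + PowerSeries.C f) +
        (PowerSeries.C v0 + PowerSeries.C v1 * (PowerSeries.X + PowerSeries.C r)) * ((PowerSeries.X + PowerSeries.C r) ^ 3 - PowerSeries.C e * (PowerSeries.X + PowerSeries.C r) ^ 2 + PowerSeries.C f * (PowerSeries.X + PowerSeries.C r)) →
      l0 * rs g (M + 1) 1 + l1 * rs g (M + 1) (PowerSeries.X + PowerSeries.C r) =
        (v0 + u1 * (M + 1 : F)⁻¹) * rs g M 1 + (v1 + 2 * u2 * (M + 1 : F)⁻¹) * rs g M (PowerSeries.X + PowerSeries.C r) := by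
    intro u0 u1 u2 v0 v1 l0 l1 h
    have h' := congrArg (rs g (M + 1)) h
    rw [← hQ', hQ, rs_add g (M + 1) (PowerSeries.C l0), rs_add g (M + 1) (_ * PowerSeries.derivative F _),
      rs_deriv g hg, rs_mul_Q g hg, rs_C_mul, rs_C_mul, rs_add g M (PowerSeries.C v0), rs_C_mul] at h'
    have hd : PowerSeries.derivative F (PowerSeries.C u0 + PowerSeries.C u1 * (PowerSeries.X + PowerSeries.C r) + PowerSeries.C u2 * (PowerSeries.X + PowerSeries.C r) ^ 2) =
        PowerSeries.C u1 * 1 + PowerSeries.C (2 * u2) * (PowerSeries.X + PowerSeries.C r) := by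
      have h2 : (PowerSeries.C (2 * u2) : PowerSeries F) = 2 * PowerSeries.C u2 := by rw [map_mul]; rfl
      simp only [map_add, map_sub, Derivation.leibniz, PowerSeries.derivative_pow, smul_eq_mul, PowerSeries.derivative_X, PowerSeries.derivative_C, h2]
      push_cast; ring
    have one : ∀ c : F, rs g (M + 1) (PowerSeries.C c) = c * rs g (M + 1) 1 := by
      intro c; rw [← rs_C_mul, mul_one]
    have one' : ∀ c : F, rs g M (PowerSeries.C c) = c * rs g M 1 := by
      intro c; rw [← rs_C_mul, mul_one]
    rw [hd, rs_add g M (PowerSeries.C u1 * 1), rs_C_mul, rs_C_mul, one, one'] at h'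
    rw [h']; ring
  constructor
  · have := main (f * (e ^ 2 - 4 * f)) (-e * (2 * e ^ 2 - 7 * f)) (2 * (e ^ 2 - 3 * f))
      (4 * e ^ 3 - 15 * e * f) (-6 * (e ^ 2 - 3 * f)) (f ^ 2 * (e ^ 2 - 4 * f)) 0 (by
        simp only [map_mul, map_add, map_sub, map_pow, map_neg, map_ofNat, map_zero]; ring)
    linear_combination this
  · have := main 0 (-f * (e ^ 2 - 2 * f)) (e * f)
      (2 * e ^ 2 * f - 6 * f ^ 2) (-3 * e * f) 0 (f ^ 2 * (e ^ 2 - 4 * f)) (by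
        simp only [map_mul, map_add, map_sub, map_pow, map_neg, map_ofNat, map_zero]; ring)
    linear_combination this

end Pade
end ThreePt


namespace ThreePt
section Pade2
variable {F : Type*} [Field F] [CharZero F]

/-- the explicit Padé sums. -/
noncomputable def ws (M L : ℕ) (α β : F) : F :=
  ∑ p ∈ Finset.HasAntidiagonal.antidiagonal L, (-1) ^ L * ((M + p.1).choose M : F) * ((M + p.2).choose M : F) *
    (α ^ (M - p.1) * β ^ (M - p.2))

lemma coeff_inv_pow (M j : ℕ) (α : F) (hα : α ≠ 0) :
    PowerSeries.coeff j ((PowerSeries.X + PowerSeries.C α)⁻¹ ^ (M + 1)) =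
      (-1) ^ j * ((M + j).choose M : F) * (α⁻¹) ^ (M + 1 + j) := by
  have h1 : (PowerSeries.X + PowerSeries.C α : PowerSeries F)⁻¹ =
      PowerSeries.C α⁻¹ * PowerSeries.rescale (-α⁻¹) (PowerSeries.mk 1) := by
    rw [PowerSeries.inv_eq_iff_mul_eq_one (by simpa using hα)]
    have h2 := PowerSeries.mk_one_mul_one_sub_eq_one F
    have h3 := congrArg (PowerSeries.rescale (-α⁻¹)) h2
    rw [map_mul, map_sub, map_one, PowerSeries.rescale_X] at h3
    have h4 : (PowerSeries.C α⁻¹ : PowerSeries F) * PowerSeries.C α = 1 := by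
      rw [← map_mul, inv_mul_cancel₀ hα, map_one]
    rw [map_neg] at h3
    linear_combination h3 + (PowerSeries.rescale (-α⁻¹) (PowerSeries.mk 1)) * h4
  rw [h1, mul_pow, ← map_pow, ← map_pow, PowerSeries.mk_one_pow_eq_mk_choose_add, PowerSeries.coeff_C_mul,
    PowerSeries.coeff_rescale, PowerSeries.coeff_mk, neg_pow]
  ring

lemma ws_eq (M L : ℕ) (hL : L ≤ M) (α β : F) (hα : α ≠ 0) (hβ : β ≠ 0) :
    (α * β) ^ (2 * M + 1) * PowerSeries.coeff L
      (((PowerSeries.X + PowerSeries.C α) * (PowerSeries.X + PowerSeries.C β))⁻¹ ^ (M + 1)) = ws M L α β := by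
  rw [PowerSeries.mul_inv_rev, mul_pow _ _ (M + 1), mul_comm (_ ^ (M+1)), PowerSeries.coeff_mul, Finset.mul_sum, ws]
  refine Finset.sum_congr rfl fun p hp => ?_
  rw [Finset.HasAntidiagonal.mem_antidiagonal] at hp
  rw [coeff_inv_pow _ _ _ hα, coeff_inv_pow _ _ _ hβ]
  have e1 : α ^ (2 * M + 1) = α ^ (M - p.1) * α ^ (M + 1 + p.1) := by
    rw [← pow_add]; congr 1; omega
  have e2 : β ^ (2 * M + 1) = β ^ (M - p.2) * β ^ (M + 1 + p.2) := by
    rw [← pow_add]; congr 1; omega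
  rw [mul_pow, e1, e2, ← hp, pow_add (-1 : F) p.1 p.2, inv_pow, inv_pow]
  field_simp

/-- the second kind of coefficient -/
noncomputable def om (M : ℕ) (x : Fin 3 → F) (i : Fin 3) : F := ws M M (x (i + 2)) (-x (i + 1))

noncomputable def om' (M : ℕ) (x : Fin 3 → F) (i : Fin 3) : F :=
  ws M (M - 1) (x (i + 2)) (-x (i + 1)) + ![-x 1, x 0, 0] i * om M x i

noncomputable def gg (x : Fin 3 → F) (i : Fin 3) : PowerSeries F :=
  (PowerSeries.X + PowerSeries.C (x (i + 2))) * (PowerSeries.X + PowerSeries.C (-x (i + 1)))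

lemma gg_const (x : Fin 3 → F) (hx : ∀ i, x i ≠ 0) (i : Fin 3) : PowerSeries.constantCoeff (gg x i) ≠ 0 := by
  simp [gg, hx]

lemma gg_Q (x : Fin 3 → F) (hs : x 0 + x 1 + x 2 = 0) (i : Fin 3) :
    (PowerSeries.X + PowerSeries.C (![-x 1, x 0, 0] i)) ^ 3
      - PowerSeries.C (x 0 - x 1) * (PowerSeries.X + PowerSeries.C (![-x 1, x 0, 0] i)) ^ 2
      + PowerSeries.C (-(x 0 * x 1)) * (PowerSeries.X + PowerSeries.C (![-x 1, x 0, 0] i))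
      = PowerSeries.X * gg x i := by
  have h2 : x 2 = - x 0 - x 1 := by linear_combination hs
  fin_cases i
  · simp [gg, h2]; ring
  · simp [gg, h2]; ring
  · simp [gg, h2]; ring

lemma pade_res (x : Fin 3 → F) (hx : ∀ i, x i ≠ 0) (hs : x 0 + x 1 + x 2 = 0) (M : ℕ) :
    ∃ U U' : Fin 3 → F, (∀ i, U i = rs (gg x i) M 1) ∧
      (∀ i, U' i = rs (gg x i) M (PowerSeries.X + PowerSeries.C (![-x 1, x 0, 0] i))) ∧
      U 0 + U 1 + U 2 = 0 ∧ U' 0 + U' 1 + U' 2 = 0 ∧ U 0 * U' 1 - U 1 * U' 0 ≠ 0 := by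
  have h2 : x 2 = - x 0 - x 1 := by linear_combination hs
  have h0 := hx 0
  have h1 := hx 1
  have h2' := hx 2
  rw [h2] at h2'
  refine ⟨_, _, fun i => rfl, fun i => rfl, ?_⟩
  induction M with
  | zero =>
    have e1 : ∀ i, rs (gg x i) 0 1 = (x (i + 2) * -x (i + 1))⁻¹ := by
      intro i; simp [rs, gg]
    have e2 : ∀ i, rs (gg x i) 0 (PowerSeries.X + PowerSeries.C (![-x 1, x 0, 0] i)) =
        ![-x 1, x 0, 0] i * (x (i + 2) * -x (i + 1))⁻¹ := by
      intro i; simp [rs, gg]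
    simp only [e1, e2]
    have a1 : (0 + 2 : Fin 3) = 2 := rfl
    have a2 : (0 + 1 : Fin 3) = 1 := rfl
    have a3 : (1 + 2 : Fin 3) = 0 := rfl
    have a4 : (1 + 1 : Fin 3) = 2 := rfl
    have a5 : (2 + 2 : Fin 3) = 1 := rfl
    have a6 : (2 + 1 : Fin 3) = 0 := rfl
    simp only [a1, a2, a3, a4, a5, a6, Matrix.cons_val_zero, Matrix.cons_val_one, Matrix.cons_val, h2]
    refine ⟨by field_simp; ring, by field_simp; ring, ?_⟩
    have : ((-x 0 - x 1) * -x 1)⁻¹ * (x 0 * (x 0 * -(-x 0 - x 1))⁻¹) -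
        (x 0 * -(-x 0 - x 1))⁻¹ * (-x 1 * ((-x 0 - x 1) * -x 1)⁻¹) =
        -((-x 0 - x 1) * -x 1)⁻¹ * (x 0 * -(-x 0 - x 1))⁻¹ * (-x 0 - x 1) := by ring
    rw [this]
    have h3 : x 1 + x 0 ≠ 0 := fun h => h2' (by linear_combination -h)
    simp [h0, h1, h2', h3]
  | succ M ih =>
    obtain ⟨i1, i2, i3⟩ := ih
    have hrec := fun i => rs_rec (gg x i) (gg_const x hx i) _ _ _ (gg_Q x hs i) M
    set Δ := (-(x 0 * x 1)) ^ 2 * ((x 0 - x 1) ^ 2 - 4 * (-(x 0 * x 1))) with hΔ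
    have hΔ0 : Δ ≠ 0 := by
      have : Δ = (x 0 * x 1 * (-x 0 - x 1)) ^ 2 := by rw [hΔ]; ring
      rw [this]; exact pow_ne_zero _ (mul_ne_zero (mul_ne_zero h0 h1) h2')
    set k : F := (M + 1 : F)⁻¹ with hk
    have hM : (M + 1 : F) ≠ 0 := by exact_mod_cast Nat.succ_ne_zero M
    obtain ⟨r0, r0'⟩ := hrec 0
    obtain ⟨r1, r1'⟩ := hrec 1
    obtain ⟨r2, r2'⟩ := hrec 2
    set u0 := rs (gg x 0) M 1
    set u1 := rs (gg x 1) M 1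
    set u2 := rs (gg x 2) M 1
    set v0 := rs (gg x 0) M (PowerSeries.X + PowerSeries.C (![-x 1, x 0, 0] 0))
    set v1 := rs (gg x 1) M (PowerSeries.X + PowerSeries.C (![-x 1, x 0, 0] 1))
    set v2 := rs (gg x 2) M (PowerSeries.X + PowerSeries.C (![-x 1, x 0, 0] 2))
    set a0 := rs (gg x 0) (M + 1) 1
    set a1 := rs (gg x 1) (M + 1) 1
    set a2 := rs (gg x 2) (M + 1) 1
    set b0 := rs (gg x 0) (M + 1) (PowerSeries.X + PowerSeries.C (![-x 1, x 0, 0] 0))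
    set b1 := rs (gg x 1) (M + 1) (PowerSeries.X + PowerSeries.C (![-x 1, x 0, 0] 1))
    set b2 := rs (gg x 2) (M + 1) (PowerSeries.X + PowerSeries.C (![-x 1, x 0, 0] 2))
    have hdet : Δ ^ 2 * (a0 * b1 - a1 * b0) = Δ * ((2 * k - 3) * (3 * (3 - k))) * (u0 * v1 - u1 * v0) := by
      have : Δ ^ 2 * (a0 * b1 - a1 * b0) = (Δ * a0) * (Δ * b1) - (Δ * a1) * (Δ * b0) := by ring
      rw [this, r0, r1, r0', r1', hΔ]; ring
    refine ⟨?_, ?_, ?_⟩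
    · apply mul_left_cancel₀ hΔ0
      rw [mul_add, mul_add, r0, r1, r2, mul_zero]
      linear_combination (4 * (x 0 - x 1) ^ 3 - 15 * (x 0 - x 1) * -(x 0 * x 1) -
          (x 0 - x 1) * (2 * (x 0 - x 1) ^ 2 - 7 * -(x 0 * x 1)) * k) * i1 +
        (((x 0 - x 1) ^ 2 - 3 * -(x 0 * x 1)) * (4 * k - 6)) * i2
    · apply mul_left_cancel₀ hΔ0
      rw [mul_add, mul_add, r0', r1', r2', mul_zero]
      linear_combination (2 * (x 0 - x 1) ^ 2 * -(x 0 * x 1) - 6 * (-(x 0 * x 1)) ^ 2 -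
        -(x 0 * x 1) * ((x 0 - x 1) ^ 2 - 2 * -(x 0 * x 1)) * k) * i1 +
        ((x 0 - x 1) * -(x 0 * x 1) * (2 * k - 3)) * i2
    · intro h
      rw [h, mul_zero] at hdet
      have hk1 : (2 * k - 3) ≠ 0 := by
        have : 2 * k - 3 = -(3 * M + 1 : ℕ) * k := by
          rw [hk]; push_cast; field_simp; ring
        rw [this]
        refine mul_ne_zero (neg_ne_zero.mpr (Nat.cast_ne_zero.mpr (by omega))) (inv_ne_zero hM)
      have hk2 : (3 - k) ≠ 0 := by
        have : 3 - k = (3 * M + 2 : ℕ) * k := by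
          rw [hk]; push_cast; field_simp; ring
        rw [this]
        refine mul_ne_zero (Nat.cast_ne_zero.mpr (by omega)) (inv_ne_zero hM)
      exact (mul_ne_zero (mul_ne_zero hΔ0 (mul_ne_zero hk1 (mul_ne_zero three_ne_zero hk2))) i3) hdet.symm

/-- The Padé identities. -/
lemma pade (x : Fin 3 → F) (hx : ∀ i, x i ≠ 0) (hs : x 0 + x 1 + x 2 = 0) (M : ℕ) (hM : 1 ≤ M) :
    (x 0 ^ (2 * M + 1) * om M x 0 + x 1 ^ (2 * M + 1) * om M x 1 + x 2 ^ (2 * M + 1) * om M x 2 = 0) ∧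
    (x 0 ^ (2 * M + 1) * om' M x 0 + x 1 ^ (2 * M + 1) * om' M x 1
      + x 2 ^ (2 * M + 1) * om' M x 2 = 0) ∧
    (x 0 ^ (2 * M + 1) * om M x 0) * (x 1 ^ (2 * M + 1) * om' M x 1) -
      (x 1 ^ (2 * M + 1) * om M x 1) * (x 0 ^ (2 * M + 1) * om' M x 0) ≠ 0 := by
  obtain ⟨U, U', hU, hU', s1, s2, hd⟩ := pade_res x hx hs M
  set Pr : F := (-(x 0 * x 1 * x 2)) ^ (2 * M + 1) with hPr
  have hPr0 : Pr ≠ 0 := by rw [hPr]; simp [hx]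
  have hprod : ∀ i : Fin 3, Pr = x i ^ (2 * M + 1) * (x (i + 2) * -x (i + 1)) ^ (2 * M + 1) := by
    intro i
    rw [hPr, ← mul_pow]
    congr 1
    fin_cases i
    · show _ = x 0 * (x 2 * -x 1); ring
    · show _ = x 1 * (x 0 * -x 2); ring
    · show _ = x 2 * (x 1 * -x 0); ring
  have hZ : ∀ i, x i ^ (2 * M + 1) * om M x i = Pr * U i := by
    intro i
    rw [hU, hprod i, om, ← ws_eq M M le_rfl _ _ (hx _) (neg_ne_zero.mpr (hx _)), rs, gg, one_mul]
    ring
  have hZ' : ∀ i, x i ^ (2 * M + 1) * om' M x i = Pr * U' i := by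
    intro i
    have e : U' i = PowerSeries.coeff (M - 1) ((gg x i)⁻¹ ^ (M + 1)) + ![-x 1, x 0, 0] i * U i := by
      rw [hU', hU, rs_add]
      congr 1
      · obtain ⟨m, rfl⟩ : ∃ m, M = m + 1 := ⟨M - 1, by omega⟩
        rw [rs, PowerSeries.coeff_succ_X_mul]; rfl
      · rw [← rs_C_mul, mul_one]
    have hw := ws_eq M (M - 1) (by omega) _ _ (hx (i + 2)) (neg_ne_zero.mpr (hx (i + 1)))
    have hZi := hZ i
    have hp := hprod i
    rw [e, om', ← hw]
    have hg : gg x i = (PowerSeries.X + PowerSeries.C (x (i + 2))) * (PowerSeries.X + PowerSeries.C (-x (i + 1))) := rfl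
    rw [← hg]
    linear_combination (![-x 1, x 0, 0] i) * hZi - (PowerSeries.coeff (M - 1)) ((gg x i)⁻¹ ^ (M + 1)) * hp
  simp only [hZ, hZ']
  refine ⟨by linear_combination Pr * s1, by linear_combination Pr * s2, ?_⟩
  have : Pr * U 0 * (Pr * U' 1) - Pr * U 1 * (Pr * U' 0) = Pr ^ 2 * (U 0 * U' 1 - U 1 * U' 0) := by ring
  rw [this]
  exact mul_ne_zero (pow_ne_zero _ hPr0) hd

end Pade2
end ThreePt


namespace ThreePt
section Count

lemma count_fun {V α : Type*} [Fintype V] (A : Finset α) (g : α → ℕ) (L : ℕ) (ρ : ℝ) (h0 : 0 < ρ) (h1 : ρ ≤ 1) :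
    (((Fintype.piFinset fun _ : V => A).filter (fun f => ∑ v, g (f v) ≤ L)).card : ℝ) * ρ ^ L ≤
      (∑ a ∈ A, ρ ^ g a) ^ (Fintype.card V) := by
  have e : (∑ a ∈ A, ρ ^ g a) ^ (Fintype.card V) =
      ∑ f ∈ Fintype.piFinset fun _ : V => A, ρ ^ (∑ v, g (f v)) := by
    have := Finset.prod_univ_sum (fun _ : V => A) (fun _ a => ρ ^ g a)
    rw [Finset.prod_const, Finset.card_univ] at this
    rw [this]
    refine Finset.sum_congr rfl fun f _ => ?_
    rw [Finset.prod_pow_eq_pow_sum]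
  rw [e, ← nsmul_eq_mul, ← Finset.sum_const]
  calc _ ≤ ∑ f ∈ (Fintype.piFinset fun _ : V => A).filter (fun f => ∑ v, g (f v) ≤ L), ρ ^ (∑ v, g (f v)) := by
        refine Finset.sum_le_sum fun f hf => ?_
        exact pow_le_pow_of_le_one h0.le h1 (Finset.mem_filter.mp hf).2
    _ ≤ _ := Finset.sum_le_sum_of_subset_of_nonneg (Finset.filter_subset _ _) (fun _ _ _ => by positivity)

lemma class_count {V α β : Type*} [Fintype V] (F : Finset β) (cls : β → V → α) (A : Finset α)
    (hA : ∀ x ∈ F, ∀ v, cls x v ∈ A) (g : α → ℕ) (L : ℕ) (hL : ∀ x ∈ F, ∑ v, g (cls x v) ≤ L)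
    (k : ℕ) (hk : ∀ x0 ∈ F, (F.filter (fun x => cls x = cls x0)).card ≤ k)
    (ρ C : ℝ) (h0 : 0 < ρ) (h1 : ρ ≤ 1) (hC : ∑ a ∈ A, ρ ^ g a ≤ C) :
    (F.card : ℝ) * ρ ^ L ≤ k * C ^ (Fintype.card V) := by
  have b1 : F.card ≤ k * (F.image cls).card := by
    refine Finset.card_le_mul_card_image F k fun a ha => ?_
    obtain ⟨x0, hx0, rfl⟩ := Finset.mem_image.mp ha
    exact hk x0 hx0
  have b2 : F.image cls ⊆ (Fintype.piFinset fun _ : V => A).filter (fun f => ∑ v, g (f v) ≤ L) := by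
    intro f hf
    obtain ⟨x, hx, rfl⟩ := Finset.mem_image.mp hf
    rw [Finset.mem_filter, Fintype.mem_piFinset]
    exact ⟨hA x hx, hL x hx⟩
  have b3 := Finset.card_le_card b2
  have b4 := count_fun (V := V) A g L ρ h0 h1
  have b5 : (F.card : ℝ) ≤ k * ((Fintype.piFinset fun _ : V => A).filter (fun f => ∑ v, g (f v) ≤ L)).card := by
    exact_mod_cast b1.trans (Nat.mul_le_mul_left k b3)
  have hn : 0 ≤ ∑ a ∈ A, ρ ^ g a := Finset.sum_nonneg fun _ _ => by positivity
  calc _ ≤ k * ((Fintype.piFinset fun _ : V => A).filter (fun f => ∑ v, g (f v) ≤ L)).card * ρ ^ L := by gcongr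
    _ ≤ k * (∑ a ∈ A, ρ ^ g a) ^ (Fintype.card V) := by rw [mul_assoc]; gcongr
    _ ≤ _ := by gcongr

lemma geom_bound (n : ℕ) (ρ : ℝ) (h0 : 0 < ρ) (h1 : ρ < 1) : ∑ k ∈ Finset.range n, ρ ^ k ≤ 1 / (1 - ρ) := by
  rw [geom_sum_eq h1.ne, ← neg_div_neg_eq, neg_sub, neg_sub]
  have : 0 < 1 - ρ := by linarith
  gcongr
  have : 0 < ρ ^ n := by positivity
  linarith

/-- counting with `Fin m × ℕ` classes -/
lemma count_nat {V β : Type*} [Fintype V] (m : ℕ) (F : Finset β) (cls : β → V → Fin m × ℕ) (L : ℕ)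
    (hL : ∀ x ∈ F, ∑ v, (cls x v).2 ≤ L)
    (k : ℕ) (hk : ∀ x0 ∈ F, (F.filter (fun x => cls x = cls x0)).card ≤ k)
    (ρ : ℝ) (h0 : 0 < ρ) (h1 : ρ < 1) :
    (F.card : ℝ) * ρ ^ L ≤ k * (m / (1 - ρ)) ^ (Fintype.card V) := by
  refine class_count F cls (Finset.univ ×ˢ Finset.range (L + 1)) ?_ (fun a => a.2) L hL k (fun x0 hx0 => by convert hk x0 hx0) ρ _ h0 h1.le ?_
  · intro x hx v
    have := Finset.single_le_sum (f := fun v => (cls x v).2) (fun _ _ => Nat.zero_le _) (Finset.mem_univ v)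
    have := hL x hx
    simp; omega
  · rw [Finset.sum_product]
    simp only [Finset.sum_const, Finset.card_univ, Fintype.card_fin, nsmul_eq_mul]
    rw [div_eq_mul_one_div]
    gcongr
    exact geom_bound _ ρ h0 h1

/-- counting with `Fin m × ℤ` classes -/
lemma count_int {V β : Type*} [Fintype V] (m : ℕ) (F : Finset β) (cls : β → V → Fin m × ℤ) (L : ℕ)
    (hL : ∀ x ∈ F, ∑ v, (cls x v).2.natAbs ≤ L)
    (k : ℕ) (hk : ∀ x0 ∈ F, (F.filter (fun x => cls x = cls x0)).card ≤ k)
    (ρ : ℝ) (h0 : 0 < ρ) (h1 : ρ < 1) :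
    (F.card : ℝ) * ρ ^ L ≤ k * (2 * m / (1 - ρ)) ^ (Fintype.card V) := by
  let e : Fin m × ℤ → Fin (2 * m) × ℕ := fun a =>
    (⟨2 * a.1 + if a.2 < 0 then 1 else 0, by split_ifs <;> omega⟩, a.2.natAbs)
  have he : Function.Injective e := by
    rintro ⟨⟨a, ha⟩, b⟩ ⟨⟨c, hc⟩, d⟩ h
    simp only [e, Prod.mk.injEq, Fin.mk.injEq] at h
    obtain ⟨h1, h2⟩ := h
    simp only [Prod.mk.injEq, Fin.mk.injEq]
    split_ifs at h1 <;> omega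
  have := count_nat (2 * m) F (fun x v => e (cls x v)) L (fun x hx => hL x hx) k (fun x0 hx0 => by
    refine le_trans (le_of_eq ?_) (hk x0 hx0)
    congr 1
    ext x
    simp only [Finset.mem_filter]
    refine and_congr_right fun _ => ⟨fun h => ?_, fun h => by rw [h]⟩
    funext v
    exact he (congrFun h v)) ρ h0 h1
  push_cast at this
  exact this

end Count
end ThreePt


namespace ThreePt

/-- A weighted place: either archimedean (`c = n`) or non-archimedean (`c = 0`). -/
structure Plc (K : Type*) [Field K] where
  A : AbsoluteValue K ℝ
  n : ℕ
  c : ℕ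
  hn : 1 ≤ n
  h : (c = n ∧ ∃ φ : K →+* ℂ, ∀ x, A x = ‖φ x‖) ∨ (c = 0 ∧ ∀ x y, A (x + y) ≤ max (A x) (A y))

namespace Plc
variable {K : Type*} [Field K] (P : Plc K)

/-- the normalized absolute value -/
noncomputable def B (x : K) : ℝ := P.A x ^ P.n

lemma B_mul (x y : K) : P.B (x * y) = P.B x * P.B y := by simp [B, mul_pow]
lemma B_one : P.B 1 = 1 := by simp [B]
lemma B_neg (x : K) : P.B (-x) = P.B x := by simp [B]
lemma B_pow (x : K) (k : ℕ) : P.B (x ^ k) = P.B x ^ k := by simp [B, ← pow_mul, mul_comm]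
lemma B_zero : P.B 0 = 0 := by simp [B, Nat.one_le_iff_ne_zero.mp P.hn]
lemma B_nonneg (x : K) : 0 ≤ P.B x := by unfold B; positivity
lemma B_pos {x : K} (hx : x ≠ 0) : 0 < P.B x := by
  have := P.A.pos hx
  unfold B; positivity

lemma B_le_B {x y : K} (h : P.A x ≤ P.A y) : P.B x ≤ P.B y := by
  unfold B; gcongr

lemma B_sum_le {β : Type*} (s : Finset β) (f : β → K) (m : ℝ) (h0 : 0 ≤ m) (hm : ∀ i ∈ s, P.B (f i) ≤ m)
    (N : ℕ) (hN : 1 ≤ N) (hs : s.card ≤ N) : P.B (∑ i ∈ s, f i) ≤ (N : ℝ) ^ P.c * m := by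
  rcases s.eq_empty_or_nonempty with rfl | hne
  · simp [B_zero]; positivity
  obtain ⟨i0, hi0, hmax⟩ := s.exists_max_image (fun i => P.A (f i)) hne
  rcases P.h with ⟨hc, -⟩ | ⟨hc, hna⟩
  · have h1 : P.A (∑ i ∈ s, f i) ≤ N * P.A (f i0) := by
      calc P.A (∑ i ∈ s, f i) ≤ ∑ i ∈ s, P.A (f i) := P.A.sum_le _ _
        _ ≤ s.card • P.A (f i0) := Finset.sum_le_card_nsmul _ _ _ hmax
        _ ≤ N * P.A (f i0) := by rw [nsmul_eq_mul]; gcongr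
    calc P.B (∑ i ∈ s, f i) ≤ (N * P.A (f i0)) ^ P.n := by unfold B; gcongr
      _ = N ^ P.c * P.B (f i0) := by rw [mul_pow, hc]; rfl
      _ ≤ _ := by gcongr; exact hm _ hi0
  · have h1 : P.A (∑ i ∈ s, f i) ≤ P.A (f i0) := by
      have : ∀ t ⊆ s, P.A (∑ i ∈ t, f i) ≤ P.A (f i0) := by
        intro t
        induction t using Finset.induction_on with
        | empty => intro _; simp
        | insert a t hat ih =>
          intro hts
          rw [Finset.sum_insert hat]
          refine (hna _ _).trans (max_le (hmax _ (hts (Finset.mem_insert_self _ _))) (ih fun x hx => hts (Finset.mem_insert_of_mem hx)))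
      exact this s (Finset.Subset.refl s)
    rw [hc, pow_zero, one_mul]
    exact (P.B_le_B h1).trans (hm _ hi0)

lemma B_add_le (x y : K) (m : ℝ) (hx : P.B x ≤ m) (hy : P.B y ≤ m) : P.B (x + y) ≤ 2 ^ P.c * m := by
  have := P.B_sum_le (Finset.univ : Finset (Fin 2)) ![x, y] m ((P.B_nonneg x).trans hx)
    (by intro i _; fin_cases i <;> simpa) 2 (by norm_num) (by simp)
  simpa using this

lemma B_natCast_le (N : ℕ) (hN : 1 ≤ N) : P.B (N : K) ≤ (N : ℝ) ^ P.c := by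
  have := P.B_sum_le (Finset.range N) (fun _ => (1 : K)) 1 zero_le_one (by simp [B_one]) N hN (by simp)
  simpa using this

lemma two_pow_c (k : ℕ) : ((2 : ℝ) ^ k) ^ P.c = Real.exp (k * (P.c * Real.log 2)) := by
  rw [Real.exp_nat_mul, Real.exp_nat_mul, Real.exp_log two_pos, ← pow_mul, ← pow_mul, mul_comm]

lemma B_add_le' (x y : K) (m : ℝ) (hx : P.B x ≤ Real.exp m) (hy : P.B y ≤ Real.exp m) :
    P.B (x + y) ≤ Real.exp (P.c * Real.log 2 + m) := by
  have := P.B_add_le x y _ hx hy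
  have h2 := P.two_pow_c 1
  rw [pow_one, Nat.cast_one, one_mul] at h2
  rwa [h2, ← Real.exp_add] at this

lemma B_choose_le (N k : ℕ) (h : k ≤ N) : P.B ((N.choose k : ℕ) : K) ≤ Real.exp (N * (P.c * Real.log 2)) := by
  refine (P.B_natCast_le _ (Nat.choose_pos h)).trans ?_
  rw [← two_pow_c]
  gcongr
  exact_mod_cast Nat.choose_le_two_pow _ _

/-- log of normalized absolute value -/
noncomputable def lb (x : K) : ℝ := Real.log (P.B x)

lemma exp_lb {x : K} (hx : x ≠ 0) : Real.exp (P.lb x) = P.B x := Real.exp_log (P.B_pos hx)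

lemma lb_mul {x y : K} (hx : x ≠ 0) (hy : y ≠ 0) : P.lb (x * y) = P.lb x + P.lb y := by
  rw [lb, B_mul, Real.log_mul (P.B_pos hx).ne' (P.B_pos hy).ne']; rfl

lemma lb_one : P.lb 1 = 0 := by simp [lb, B_one]
lemma lb_neg (x : K) : P.lb (-x) = P.lb x := by simp [lb, B_neg]
lemma lb_inv {x : K} (hx : x ≠ 0) : P.lb x⁻¹ = - P.lb x := by
  have := P.lb_mul hx (inv_ne_zero hx)
  rw [mul_inv_cancel₀ hx, lb_one] at this
  linarith

lemma B_ws_le (M L : ℕ) (hM : 1 ≤ M) (hL : L ≤ M) (α β : K) (m : ℝ) (hα : P.B α ≤ Real.exp m)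
    (hβ : P.B β ≤ Real.exp m) :
    P.B (ws M L α β) ≤ Real.exp (4 * M * (P.c * Real.log 2) + (2 * M - L) * m) := by
  set l := P.c * Real.log 2 with hl
  have hl0 : 0 ≤ l := by have := Real.log_nonneg one_le_two; positivity
  have key := P.B_sum_le (Finset.HasAntidiagonal.antidiagonal L) (fun p => (-1) ^ L * ((M + p.1).choose M : K) * ((M + p.2).choose M : K) *
    (α ^ (M - p.1) * β ^ (M - p.2))) (Real.exp (3 * M * l + (2 * M - L) * m)) (by positivity) (by
      intro p hp
      rw [Finset.HasAntidiagonal.mem_antidiagonal] at hp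
      have h1 := P.B_choose_le (M + p.1) M (by omega)
      have h2 := P.B_choose_le (M + p.2) M (by omega)
      have h3 : P.B (α ^ (M - p.1)) ≤ Real.exp ((M - p.1) * m) := by
        rw [B_pow, ← Nat.cast_sub (by omega), Real.exp_nat_mul]
        have := P.B_nonneg α
        gcongr
      have h4 : P.B (β ^ (M - p.2)) ≤ Real.exp ((M - p.2) * m) := by
        rw [B_pow, ← Nat.cast_sub (by omega), Real.exp_nat_mul]
        have := P.B_nonneg β
        gcongr
      have h5 : P.B ((-1) ^ L) = 1 := by rw [B_pow, B_neg, B_one, one_pow]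
      rw [B_mul, B_mul, B_mul, B_mul, h5, one_mul]
      calc _ ≤ Real.exp ((M + p.1 : ℕ) * l) * Real.exp ((M + p.2 : ℕ) * l) * (Real.exp ((M - p.1) * m) * Real.exp ((M - p.2) * m)) := by
            have := P.B_nonneg
            gcongr <;> first | apply this | exact mul_nonneg (this _) (this _)
        _ = Real.exp ((2 * M + L) * l + (2 * M - L) * m) := by
            rw [← Real.exp_add, ← Real.exp_add, ← Real.exp_add, ← hp]
            congr 1; push_cast; ring
        _ ≤ _ := by
            rw [Real.exp_le_exp]
            have : (L : ℝ) ≤ M := by exact_mod_cast hL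
            nlinarith) (2 ^ M) Nat.one_le_two_pow (by
      rw [Finset.Nat.card_antidiagonal]
      have : M < 2 ^ M := Nat.lt_two_pow_self
      omega)
  rw [ws]
  refine key.trans ?_
  push_cast
  rw [two_pow_c, ← Real.exp_add, Real.exp_le_exp]
  linarith

lemma B_om_le (M : ℕ) (hM : 1 ≤ M) (x : Fin 3 → K) (m : ℝ) (hm : 0 ≤ m) (hx : ∀ i, P.B (x i) ≤ Real.exp m) (i : Fin 3) :
    P.B (om M x i) ≤ Real.exp (4 * M * (P.c * Real.log 2) + M * m) := by
  refine (P.B_ws_le M M hM le_rfl _ _ m (hx _) (by rw [B_neg]; exact hx _)).trans ?_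
  rw [Real.exp_le_exp]
  linarith

lemma B_om'_le (M : ℕ) (hM : 1 ≤ M) (x : Fin 3 → K) (m : ℝ) (hm : 0 ≤ m) (hx : ∀ i, P.B (x i) ≤ Real.exp m) (i : Fin 3) :
    P.B (om' M x i) ≤ Real.exp ((4 * M + 1) * (P.c * Real.log 2) + (M + 1) * m) := by
  have h1 := P.B_ws_le M (M - 1) hM (by omega) (x (i + 2)) (-x (i + 1)) m (hx _) (by rw [B_neg]; exact hx _)
  have h2 : P.B (![-x 1, x 0, 0] i) ≤ Real.exp m := by
    fin_cases i
    · simpa [B_neg] using hx 1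
    · simpa using hx 0
    · simp [B_zero]; positivity
  have h3 := P.B_om_le M hM x m hm hx i
  rw [Nat.cast_sub hM, Nat.cast_one] at h1
  have := P.B_add_le' _ _ (4 * M * (P.c * Real.log 2) + (M + 1) * m) (h1.trans (le_of_eq (by congr 1; ring)))
    (show P.B (![-x 1, x 0, 0] i * om M x i) ≤ _ by
      rw [B_mul]
      calc _ ≤ Real.exp m * Real.exp (4 * M * (P.c * Real.log 2) + M * m) := by
            have := P.B_nonneg
            gcongr; apply this
        _ = _ := by rw [← Real.exp_add]; congr 1; ring)
  rw [om']
  refine this.trans (le_of_eq ?_)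
  congr 1; ring

/-- wedge estimate -/
lemma B_wedge_le (x y q : Fin 3 → K) (e : ℕ) (i : Fin 3) (G mx my wx wy : ℝ)
    (hwx : 0 ≤ wx) (hwy : 0 ≤ wy)
    (hx : ∀ k, P.B (x k) ≤ Real.exp mx) (hxi : P.B (x i) ≤ Real.exp (mx - wx))
    (hy : ∀ k, P.B (y k) ≤ Real.exp my) (hyi : P.B (y i) ≤ Real.exp (my - wy))
    (hq : ∀ k, P.B (q k) ≤ Real.exp G)
    (hZ : x 0 ^ e * q 0 + x 1 ^ e * q 1 + x 2 ^ e * q 2 = 0) (hs : y 0 + y 1 + y 2 = 0) :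
    P.B (x 0 ^ e * q 0 * y 1 - x 1 ^ e * q 1 * y 0) ≤
      Real.exp (P.c * Real.log 2 + (e * mx + G + my - min (e * wx) wy)) := by
  have hnn := P.B_nonneg
  have hgen : ∀ k, P.B (x i ^ e * q i * y k) ≤ Real.exp (e * mx + G + my - min (e * wx) wy) := by
    intro k
    rw [B_mul, B_mul, B_pow]
    calc _ ≤ Real.exp (mx - wx) ^ e * Real.exp G * Real.exp my := by
          gcongr <;> first | apply hnn | skip
          · exact hq i
          · exact hy k
      _ = Real.exp (e * mx + G + my - e * wx) := by
          rw [← Real.exp_nat_mul, ← Real.exp_add, ← Real.exp_add]; congr 1; ring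
      _ ≤ _ := by rw [Real.exp_le_exp]; linarith [min_le_left (e * wx) wy]
  have hgen' : ∀ k, P.B (-(x k ^ e * q k * y i)) ≤ Real.exp (e * mx + G + my - min (e * wx) wy) := by
    intro k
    rw [B_neg, B_mul, B_mul, B_pow]
    calc _ ≤ Real.exp mx ^ e * Real.exp G * Real.exp (my - wy) := by
          gcongr <;> first | apply hnn | skip
          · exact hx k
          · exact hq k
      _ = Real.exp (e * mx + G + my - wy) := by
          rw [← Real.exp_nat_mul, ← Real.exp_add, ← Real.exp_add]; congr 1; ring
      _ ≤ _ := by rw [Real.exp_le_exp]; linarith [min_le_right (e * wx) wy]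
  have hk : ∀ k, P.B (x i ^ e * q i * y k + -(x k ^ e * q k * y i)) ≤ _ :=
    fun k => P.B_add_le' _ _ _ (hgen k) (hgen' k)
  have h3 : i = 0 ∨ i = 1 ∨ i = 2 := by fin_cases i <;> simp
  rcases h3 with rfl | rfl | rfl
  · convert hk 1 using 2; ring
  · convert hk 0 using 1; rw [← B_neg]; congr 1; ring
  · convert hk 0 using 2
    linear_combination x 0 ^ e * q 0 * hs - y 0 * hZ

/-- ultrametric-like middle inequality. -/
lemma lb_tri {x y z : K} (hx : x ≠ 0) (hs : x + y + z = 0) (m : ℝ) (hy : P.B y ≤ Real.exp m) (hz : P.B z ≤ Real.exp m) :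
    P.lb x ≤ P.c * Real.log 2 + m := by
  have h := P.B_add_le' y z m hy hz
  have : x = -(y + z) := by linear_combination hs
  rw [← Real.exp_le_exp, P.exp_lb hx, this, B_neg]
  exact h

/-- class of argument -/
noncomputable def ac (a : K) : Fin 14 :=
  if h : ∃ φ : K →+* ℂ, ∀ x, P.A x = ‖φ x‖ then
    Fin.ofNat 14 (⌊2 * (h.choose a).arg⌋ + 7).toNat else 0

lemma small_local {a b : K} (ha : a ≠ 0) (hb : b ≠ 0) (hab : a ≠ b) (hac : P.c ≠ 0 → P.ac a = P.ac b) :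
    P.lb (a - b) ≤ - (P.c * Real.log 2) + (P.lb a + P.lb b) / 2 + 3 / 2 * |P.lb a - P.lb b| := by
  wlog hw : P.B b ≤ P.B a generalizing a b
  · have := this hb ha hab.symm (fun h => (hac h).symm) (le_of_not_ge hw)
    rw [← neg_sub, lb_neg]
    rw [abs_sub_comm]
    linarith
  have hla : P.lb b ≤ P.lb a := Real.log_le_log (P.B_pos hb) hw
  have hApos := P.A.pos ha
  have hBpos := P.A.pos hb
  have hA : P.A b ≤ P.A a := by
    by_contra! hh
    have : P.A a ^ P.n < P.A b ^ P.n := pow_lt_pow_left₀ hh hApos.le (Nat.one_le_iff_ne_zero.mp P.hn)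
    exact absurd hw (not_le.mpr this)
  rw [abs_of_nonneg (by linarith)]
  have hd : P.A (a - b) ≠ 0 := by rw [Ne, AbsoluteValue.eq_zero, sub_eq_zero]; exact hab
  have hdpos : 0 < P.A (a - b) := P.A.pos (sub_ne_zero.mpr hab)
  have lbA : ∀ x, P.lb x = P.n * Real.log (P.A x) := fun x => by rw [lb, B, Real.log_pow]
  rcases P.h with ⟨hc, hφ⟩ | ⟨hc, hna⟩
  · replace hac := hac (by have := P.hn; omega)
    have key : P.A (a - b) ≤ P.A a ^ 2 / (2 * P.A b) := by
      simp only [ac, dif_pos hφ] at hac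
      set φ := hφ.choose
      have hφ' : ∀ x, P.A x = ‖φ x‖ := hφ.choose_spec
      have hr : ∀ z : ℂ, 0 ≤ ⌊2 * z.arg⌋ + 7 ∧ ⌊2 * z.arg⌋ + 7 < 14 := by
        intro z
        have h1 := Complex.neg_pi_lt_arg z
        have h2 := Complex.arg_le_pi z
        have h3 := Real.pi_lt_d2
        constructor
        · have : (-7 : ℤ) ≤ ⌊2 * z.arg⌋ := by
            rw [Int.le_floor]; push_cast; linarith
          omega
        · have : ⌊2 * z.arg⌋ < 7 := by
            rw [Int.floor_lt]; push_cast; linarith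
          omega
      have hfl : ⌊2 * (φ a).arg⌋ = ⌊2 * (φ b).arg⌋ := by
        have := congrArg Fin.val hac
        simp only [Fin.ofNat] at this
        have h1 := hr (φ a)
        have h2 := hr (φ b)
        omega
      have hang : |(φ a).arg - (φ b).arg| ≤ 1 / 2 := by
        have := Int.abs_sub_lt_one_of_floor_eq_floor hfl
        rw [← mul_sub, abs_mul, abs_two] at this
        linarith
      have hexp : ‖Complex.exp (((φ a).arg - (φ b).arg : ℝ) * Complex.I) - 1‖ ≤ 1 / 2 := by
        refine le_trans ?_ hang
        have := Real.norm_exp_I_mul_ofReal_sub_one_le (x := (φ a).arg - (φ b).arg)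
        rw [mul_comm] at this
        exact this
      have ea := Complex.norm_mul_exp_arg_mul_I (φ a)
      have eb := Complex.norm_mul_exp_arg_mul_I (φ b)
      have e1 : φ (a - b) = ((‖φ a‖ - ‖φ b‖ : ℝ) : ℂ) * Complex.exp ((φ a).arg * Complex.I) +
          ‖φ b‖ * Complex.exp ((φ b).arg * Complex.I) * (Complex.exp (((φ a).arg - (φ b).arg : ℝ) * Complex.I) - 1) := by
        have : Complex.exp ((φ a).arg * Complex.I) = Complex.exp ((φ b).arg * Complex.I) * Complex.exp (((φ a).arg - (φ b).arg : ℝ) * Complex.I) := by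
          rw [← Complex.exp_add]; congr 1; push_cast; ring
        rw [map_sub]
        nth_rewrite 1 [← ea]
        nth_rewrite 1 [← eb]
        push_cast
        rw [this]
        push_cast
        ring
      have e2 : P.A (a - b) ≤ (P.A a - P.A b) + P.A b * (1 / 2) := by
        rw [hφ' (a - b), e1, hφ' a, hφ' b]
        refine (norm_add_le _ _).trans ?_
        rw [norm_mul, norm_mul, norm_mul, Complex.norm_exp_ofReal_mul_I, Complex.norm_exp_ofReal_mul_I,
          Complex.norm_real, Complex.norm_real, norm_norm, mul_one, mul_one, Real.norm_eq_abs, abs_of_nonneg]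
        · gcongr
        · rw [← hφ', ← hφ']; linarith
      rw [le_div_iff₀ (by positivity)]
      nlinarith [sq_nonneg (P.A a - P.A b)]
    have := Real.log_le_log hdpos key
    rw [Real.log_div (by positivity) (by positivity), Real.log_pow, Real.log_mul (by norm_num) hBpos.ne'] at this
    rw [lbA, lbA a, lbA b, hc]
    push_cast at this
    have hnn : (0 : ℝ) ≤ P.n := by positivity
    nlinarith
  · have key : P.A (a - b) ≤ P.A a := by
      rw [sub_eq_add_neg]
      refine (hna _ _).trans (max_le le_rfl ?_)
      rw [AbsoluteValue.map_neg]; exact hA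
    have h1 : P.lb (a - b) ≤ P.lb a := by
      rw [lbA, lbA]
      have := Real.log_le_log hdpos key
      gcongr
    rw [hc]
    push_cast
    linarith

end Plc
end ThreePt


namespace ThreePt

lemma exists_amin (ℓ : Fin 3 → ℝ) : ∃ i, ∀ j, ℓ i ≤ ℓ j := Finite.exists_min ℓ
lemma exists_amax (ℓ : Fin 3 → ℝ) : ∃ i, ∀ j, ℓ j ≤ ℓ i := Finite.exists_max ℓ

noncomputable def amin (ℓ : Fin 3 → ℝ) : Fin 3 := (exists_amin ℓ).choose
noncomputable def mx (ℓ : Fin 3 → ℝ) : ℝ := ℓ (exists_amax ℓ).choose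
noncomputable def wd (ℓ : Fin 3 → ℝ) : ℝ := mx ℓ - ℓ (amin ℓ)

lemma amin_le (ℓ : Fin 3 → ℝ) (j : Fin 3) : ℓ (amin ℓ) ≤ ℓ j := (exists_amin ℓ).choose_spec j
lemma le_mx (ℓ : Fin 3 → ℝ) (j : Fin 3) : ℓ j ≤ mx ℓ := (exists_amax ℓ).choose_spec j
lemma wd_nonneg (ℓ : Fin 3 → ℝ) : 0 ≤ wd ℓ := sub_nonneg.mpr (le_mx ℓ _)

lemma sum_three_ge (ℓ : Fin 3 → ℝ) (k : ℝ) (hk : 0 ≤ k) (h0 : ℓ 0 ≤ k + max (ℓ 1) (ℓ 2)) (h1 : ℓ 1 ≤ k + max (ℓ 0) (ℓ 2))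
    (h2 : ℓ 2 ≤ k + max (ℓ 0) (ℓ 1)) : 3 * mx ℓ - wd ℓ - k ≤ ℓ 0 + ℓ 1 + ℓ 2 := by
  have hmx : mx ℓ = ℓ 0 ∨ mx ℓ = ℓ 1 ∨ mx ℓ = ℓ 2 := by
    unfold mx
    generalize (exists_amax ℓ).choose = i
    fin_cases i <;> simp
  have hmn : ℓ (amin ℓ) = ℓ 0 ∨ ℓ (amin ℓ) = ℓ 1 ∨ ℓ (amin ℓ) = ℓ 2 := by
    generalize (amin ℓ) = i
    fin_cases i <;> simp
  have m0 := le_mx ℓ 0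
  have m1 := le_mx ℓ 1
  have m2 := le_mx ℓ 2
  have n0 := amin_le ℓ 0
  have n1 := amin_le ℓ 1
  have n2 := amin_le ℓ 2
  unfold wd
  rcases hmx with h | h | h <;> rcases hmn with h' | h' | h' <;>
    rcases max_cases (ℓ 1) (ℓ 2) with ⟨e1, _⟩ | ⟨e1, _⟩ <;>
    rcases max_cases (ℓ 0) (ℓ 2) with ⟨e2, _⟩ | ⟨e2, _⟩ <;>
    rcases max_cases (ℓ 0) (ℓ 1) with ⟨e3, _⟩ | ⟨e3, _⟩ <;>
    rw [e1] at h0 <;> rw [e2] at h1 <;> rw [e3] at h2 <;> linarith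

variable {K : Type*} [Field K] {ι : Type*} [Fintype ι]

structure Good (P : ι → Plc K) (S : Finset ι) (R : Subring K) : Prop where
  H1 : ∀ D ∈ R, D ≠ 0 → 0 ≤ ∑ v, (P v).lb D
  hd0 : 1 ≤ ∑ v, (P v).c
  hd : ∑ v, (P v).c ≤ 2 * S.card
  hS : ∀ v, (P v).c ≠ 0 → v ∈ S

structure IsSol (R : Subring K) (a : K) : Prop where
  a0 : a ≠ 0
  b0 : 1 - a ≠ 0
  aR : a ∈ R
  bR : 1 - a ∈ R
  aR' : a⁻¹ ∈ R
  bR' : (1 - a)⁻¹ ∈ R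

def tr (a : K) : Fin 3 → K := ![a, 1 - a, -1]

noncomputable def el (P : ι → Plc K) (a : K) (v : ι) : Fin 3 → ℝ := fun i => (P v).lb (tr a i)

noncomputable def ht (P : ι → Plc K) (a : K) : ℝ := ∑ v, mx (el P a v)
noncomputable def WW (P : ι → Plc K) (a : K) : ℝ := ∑ v, wd (el P a v)

lemma tr_sum (a : K) : tr a 0 + tr a 1 + tr a 2 = 0 := by simp [tr]

lemma IsSol.tr_ne {R : Subring K} {a : K} (ha : IsSol R a) (i : Fin 3) : tr a i ≠ 0 := by
  have := ha.a0
  have := ha.b0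
  fin_cases i <;> simpa [tr]

lemma IsSol.tr_mem {R : Subring K} {a : K} (ha : IsSol R a) (i : Fin 3) : tr a i ∈ R := by
  fin_cases i
  · simpa [tr] using ha.aR
  · simpa [tr] using ha.bR
  · simpa [tr] using R.one_mem

lemma IsSol.tr_inv_mem {R : Subring K} {a : K} (ha : IsSol R a) (i : Fin 3) : (tr a i)⁻¹ ∈ R := by
  fin_cases i
  · simpa [tr] using ha.aR'
  · simpa [tr] using ha.bR'
  · simpa [tr, inv_neg] using R.one_mem

variable {P : ι → Plc K} {S : Finset ι} {R : Subring K}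

lemma el_two (P : ι → Plc K) (a : K) (v : ι) : el P a v 2 = 0 := by
  simp [el, tr, Plc.lb_neg, Plc.lb_one]

lemma mx_nonneg (P : ι → Plc K) (a : K) (v : ι) : 0 ≤ mx (el P a v) := by
  rw [← el_two P a v]; exact le_mx _ _

lemma WW_nonneg (P : ι → Plc K) (a : K) : 0 ≤ WW P a := Finset.sum_nonneg fun v _ => wd_nonneg _

lemma Good.sum_el (hG : Good P S R) {a : K} (ha : IsSol R a) (i : Fin 3) : ∑ v, el P a v i = 0 := by
  have h1 := hG.H1 _ (ha.tr_mem i) (ha.tr_ne i)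
  have h2 := hG.H1 _ (ha.tr_inv_mem i) (inv_ne_zero (ha.tr_ne i))
  have : ∑ v, (P v).lb (tr a i)⁻¹ = - ∑ v, (P v).lb (tr a i) := by
    rw [← Finset.sum_neg_distrib]
    exact Finset.sum_congr rfl fun v _ => (P v).lb_inv (ha.tr_ne i)
  rw [this] at h2
  unfold el
  linarith

/-- total archimedean degree -/
noncomputable def dd (P : ι → Plc K) : ℝ := ∑ v, ((P v).c : ℝ)

lemma IsSol.B_le {a : K} (ha : IsSol R a) (v : ι) (i : Fin 3) : (P v).B (tr a i) ≤ Real.exp (mx (el P a v)) := by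
  rw [← (P v).exp_lb (ha.tr_ne i), Real.exp_le_exp]
  exact le_mx (el P a v) i

lemma IsSol.B_amin {a : K} (ha : IsSol R a) (v : ι) :
    (P v).B (tr a (amin (el P a v))) ≤ Real.exp (mx (el P a v) - wd (el P a v)) := by
  rw [← (P v).exp_lb (ha.tr_ne _), Real.exp_le_exp, wd]
  simp [el]

lemma Good.ht_le (hG : Good P S R) {a : K} (ha : IsSol R a) : 3 * ht P a ≤ WW P a + dd P * Real.log 2 := by
  have hl := Real.log_nonneg one_le_two
  have h : ∀ v, 3 * mx (el P a v) - wd (el P a v) - (P v).c * Real.log 2 ≤ el P a v 0 + el P a v 1 + el P a v 2 := by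
    intro v
    have hb : ∀ i, ∀ m, el P a v i ≤ m → (P v).B (tr a i) ≤ Real.exp m := by
      intro i m h
      rw [← (P v).exp_lb (ha.tr_ne i), Real.exp_le_exp]
      exact h
    have hs := tr_sum a
    apply sum_three_ge
    · positivity
    · exact (P v).lb_tri (ha.tr_ne 0) hs _ (hb 1 _ (le_max_left _ _)) (hb 2 _ (le_max_right _ _))
    · exact (P v).lb_tri (ha.tr_ne 1) (y := tr a 0) (z := tr a 2) (by linear_combination hs) _ (hb 0 _ (le_max_left _ _)) (hb 2 _ (le_max_right _ _))
    · exact (P v).lb_tri (ha.tr_ne 2) (y := tr a 0) (z := tr a 1) (by linear_combination hs) _ (hb 0 _ (le_max_left _ _)) (hb 1 _ (le_max_right _ _))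
  have h2 := Finset.sum_le_sum (s := Finset.univ) fun v _ => h v
  simp only [Finset.sum_add_distrib, Finset.sum_sub_distrib, hG.sum_el ha, ← Finset.mul_sum, ← Finset.sum_mul] at h2
  unfold ht WW dd
  linarith

/-- the class of a large solution -/
noncomputable def lcls (P : ι → Plc K) (S : Finset ι) (a : K) (v : S) : Fin 3 × ℕ :=
  (amin (el P a v), ⌊24 * S.card * wd (el P a v) / WW P a⌋₊)

lemma Good.S_pos (hG : Good P S R) : 1 ≤ S.card := by
  have := hG.hd0; have := hG.hd; omega

lemma min_sum (hG : Good P S R) {a b : K} (hW : 0 < WW P a) (hW' : 0 < WW P b)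
    (hoff : ∀ v ∉ S, el P a v = el P b v) (hcl : lcls P S a = lcls P S b) (e : ℝ) (he : 1 ≤ e) :
    23 / 24 * min (e * WW P a) (WW P b) ≤ ∑ v, min (e * wd (el P a v)) (wd (el P b v)) := by
  set m := min (e * WW P a) (WW P b) with hm
  have hm0 : 0 ≤ m := by rw [hm]; apply le_min <;> nlinarith
  have hs : (0 : ℝ) < S.card := by exact_mod_cast hG.S_pos
  rw [← Finset.sum_add_sum_compl S]
  have h1 : ∑ v ∈ S, (wd (el P b v) / WW P b - 1 / (24 * S.card)) * m ≤ ∑ v ∈ S, min (e * wd (el P a v)) (wd (el P b v)) := by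
    refine Finset.sum_le_sum fun v hv => ?_
    have hc := congrArg Prod.snd (congrFun hcl ⟨v, hv⟩)
    simp only [lcls] at hc
    set k := ⌊24 * S.card * wd (el P b v) / WW P b⌋₊ with hk
    have hka : (k : ℝ) ≤ 24 * S.card * wd (el P a v) / WW P a := by
      rw [← hc]; exact Nat.floor_le (by have := wd_nonneg (el P a v); positivity)
    have hkb : (k : ℝ) ≤ 24 * S.card * wd (el P b v) / WW P b := by
      exact Nat.floor_le (by have := wd_nonneg (el P b v); positivity)
    have hkb' : 24 * S.card * wd (el P b v) / WW P b < k + 1 := Nat.lt_floor_add_one _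
    have hθ : (wd (el P b v) / WW P b - 1 / (24 * S.card)) * m ≤ k / (24 * S.card) * m := by
      gcongr
      rw [le_div_iff₀ (by positivity)]
      have : (wd (el P b v) / WW P b - 1 / (24 * S.card)) * (24 * S.card) = 24 * S.card * wd (el P b v) / WW P b - 1 := by
        field_simp
      rw [this]; linarith
    refine hθ.trans (le_min ?_ ?_)
    · calc _ ≤ k / (24 * S.card) * (e * WW P a) := by gcongr; exact min_le_left _ _
        _ ≤ (24 * S.card * wd (el P a v) / WW P a) / (24 * S.card) * (e * WW P a) := by gcongr
        _ = _ := by field_simp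
    · calc _ ≤ k / (24 * S.card) * (WW P b) := by gcongr; exact min_le_right _ _
        _ ≤ (24 * S.card * wd (el P b v) / WW P b) / (24 * S.card) * (WW P b) := by gcongr
        _ = _ := by field_simp
  have h2 : ∑ v ∈ Sᶜ, wd (el P b v) ≤ ∑ v ∈ Sᶜ, min (e * wd (el P a v)) (wd (el P b v)) := by
    refine Finset.sum_le_sum fun v hv => ?_
    rw [hoff v (by simpa using hv)]
    have := wd_nonneg (el P b v)
    exact le_min (by nlinarith) le_rfl
  have h3 : ∑ v ∈ S, wd (el P b v) + ∑ v ∈ Sᶜ, wd (el P b v) = WW P b := Finset.sum_add_sum_compl S _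
  rw [← Finset.sum_mul, Finset.sum_sub_distrib, ← Finset.sum_div, Finset.sum_const, nsmul_eq_mul] at h1
  have h4 : (S.card : ℝ) * (1 / (24 * S.card)) = 1 / 24 := by field_simp
  rw [h4] at h1
  have h5 : ∑ v ∈ S, wd (el P b v) = WW P b - ∑ v ∈ Sᶜ, wd (el P b v) := by linarith
  rw [h5, sub_div, div_self hW'.ne'] at h1
  have h6 : 0 ≤ ∑ v ∈ Sᶜ, wd (el P b v) := Finset.sum_nonneg fun v _ => wd_nonneg _
  have h7 : (∑ v ∈ Sᶜ, wd (el P b v)) / WW P b * m ≤ ∑ v ∈ Sᶜ, wd (el P b v) := by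
    calc _ ≤ (∑ v ∈ Sᶜ, wd (el P b v)) / WW P b * WW P b := by gcongr; exact min_le_right _ _
      _ = _ := by field_simp
  nlinarith

lemma gap (hG : Good P S R) {a b : K} (ha : IsSol R a) (hb : IsSol R b) (hW : 0 < WW P a) (hW' : 0 < WW P b)
    (hoff : ∀ v ∉ S, el P a v = el P b v) (hcl : lcls P S a = lcls P S b) (e : ℕ) (he : 1 ≤ e) (q : Fin 3 → K)
    (hq : ∀ k, q k ∈ R) (p r : ℝ)
    (hB : ∀ v k, (P v).B (q k) ≤ Real.exp (p * ((P v).c * Real.log 2) + r * mx (el P a v)))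
    (hZ : tr a 0 ^ e * q 0 + tr a 1 ^ e * q 1 + tr a 2 ^ e * q 2 = 0)
    (hD : tr a 0 ^ e * q 0 * tr b 1 - tr a 1 ^ e * q 1 * tr b 0 ≠ 0) :
    0 ≤ (p + 1) * (dd P * Real.log 2) + (e + r) * ht P a + ht P b - 23 / 24 * min (e * WW P a) (WW P b) := by
  have hR : tr a 0 ^ e * q 0 * tr b 1 - tr a 1 ^ e * q 1 * tr b 0 ∈ R :=
    R.sub_mem (R.mul_mem (R.mul_mem (R.pow_mem (ha.tr_mem _) _) (hq _)) (hb.tr_mem _))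
      (R.mul_mem (R.mul_mem (R.pow_mem (ha.tr_mem _) _) (hq _)) (hb.tr_mem _))
  have h1 := hG.H1 _ hR hD
  have hidx : ∀ v, amin (el P a v) = amin (el P b v) := by
    intro v
    by_cases hv : v ∈ S
    · exact congrArg Prod.fst (congrFun hcl ⟨v, hv⟩)
    · rw [hoff v hv]
  have h2 : ∀ v, (P v).lb (tr a 0 ^ e * q 0 * tr b 1 - tr a 1 ^ e * q 1 * tr b 0) ≤
      (p + 1) * ((P v).c * Real.log 2) + (e + r) * mx (el P a v) + mx (el P b v) - min (e * wd (el P a v)) (wd (el P b v)) := by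
    intro v
    have := (P v).B_wedge_le (tr a) (tr b) q e (amin (el P a v)) (p * ((P v).c * Real.log 2) + r * mx (el P a v))
      (mx (el P a v)) (mx (el P b v)) (wd (el P a v)) (wd (el P b v)) (wd_nonneg _) (wd_nonneg _) (ha.B_le v)
      (ha.B_amin v) (hb.B_le v) (by rw [hidx]; exact hb.B_amin v) (hB v) hZ (tr_sum b)
    rw [← (P v).exp_lb hD, Real.exp_le_exp] at this
    linarith
  have h3 := Finset.sum_le_sum (s := Finset.univ) fun v _ => h2 v
  simp only [Finset.sum_add_distrib, Finset.sum_sub_distrib, ← Finset.mul_sum, ← Finset.sum_mul] at h3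
  have h4 := min_sum hG hW hW' hoff hcl e (by exact_mod_cast he)
  unfold ht dd
  linarith

lemma dd_pos (hG : Good P S R) : 1 ≤ dd P := by
  have := hG.hd0
  unfold dd
  exact_mod_cast this

lemma gap_small (hG : Good P S R) {a b : K} (ha : IsSol R a) (hb : IsSol R b) (hab : a ≠ b) (hL : 21 * dd P < WW P a)
    (hle : WW P a ≤ WW P b)
    (hoff : ∀ v ∉ S, el P a v = el P b v) (hcl : lcls P S a = lcls P S b) : 3 / 2 * WW P a ≤ WW P b := by
  have hd := dd_pos hG
  have h := gap hG ha hb (by linarith) (by linarith) hoff hcl 1 le_rfl (fun _ => 1) (fun _ => R.one_mem) 0 0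
    (by intro v k; simp [Plc.B_one]) (by simpa using tr_sum a) (by
      simp only [tr, pow_one, mul_one, Matrix.cons_val_zero, Matrix.cons_val_one]
      intro h; apply hab; linear_combination h)
  have h1 := hG.ht_le ha
  have h2 := hG.ht_le hb
  rw [Nat.cast_one, one_mul, min_eq_left hle] at h
  have hl := Real.log_two_lt_d9
  have : dd P * Real.log 2 ≤ dd P * 0.6931471808 := by gcongr
  linarith

lemma ws_mem (M L : ℕ) {α β : K} (hα : α ∈ R) (hβ : β ∈ R) : ws M L α β ∈ R := by
  unfold ws
  refine R.sum_mem fun p _ => ?_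
  have h1 : (-1 : K) ∈ R := R.neg_mem R.one_mem
  exact R.mul_mem (R.mul_mem (R.mul_mem (R.pow_mem h1 _) (natCast_mem R _)) (natCast_mem R _)) (R.mul_mem (R.pow_mem hα _) (R.pow_mem hβ _))

lemma om_mem (M : ℕ) {x : Fin 3 → K} (hx : ∀ i, x i ∈ R) (i : Fin 3) : om M x i ∈ R :=
  ws_mem M M (hx _) (R.neg_mem (hx _))

lemma om'_mem (M : ℕ) {x : Fin 3 → K} (hx : ∀ i, x i ∈ R) (i : Fin 3) : om' M x i ∈ R := by
  refine R.add_mem (ws_mem M _ (hx _) (R.neg_mem (hx _))) (R.mul_mem ?_ (om_mem M hx i))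
  fin_cases i
  · simpa using hx 1
  · simpa using hx 0
  · simp

lemma gap_large [CharZero K] (hG : Good P S R) {a b : K} (ha : IsSol R a) (hb : IsSol R b) (hL : 21 * dd P < WW P a)
    (hoff : ∀ v ∉ S, el P a v = el P b v) (hcl : lcls P S a = lcls P S b) : WW P b < 21 * WW P a := by
  have hd := dd_pos hG
  by_contra! hge
  have hWa : 0 < WW P a := by linarith
  have hWb : 0 < WW P b := by linarith
  set lam := WW P b / WW P a with hlam
  have hlam21 : 21 ≤ lam := by rw [hlam, le_div_iff₀ hWa]; exact hge
  set M := ⌊(lam - 1) / 2⌋₊ with hM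
  have hM10 : 10 ≤ M := Nat.le_floor (by push_cast; linarith)
  have hM1 : (M : ℝ) ≤ (lam - 1) / 2 := Nat.floor_le (by linarith)
  have hM2 : (lam - 1) / 2 < M + 1 := Nat.lt_floor_add_one _
  have hWlam : WW P b = lam * WW P a := by rw [hlam]; field_simp
  obtain ⟨p1, p2, p3⟩ := pade (tr a) ha.tr_ne (tr_sum a) M (by omega)
  have hl := Real.log_two_lt_d9
  have hl0 := Real.log_pos one_lt_two
  have hfin : 0 ≤ ((4 * M + 1 : ℝ) + 1) * (dd P * Real.log 2) + ((2 * M + 1 : ℕ) + (M + 1 : ℝ)) * ht P a + ht P b - 23 / 24 * min ((2 * M + 1 : ℕ) * WW P a) (WW P b) := by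
    by_cases h0 : tr a 0 ^ (2 * M + 1) * om M (tr a) 0 * tr b 1 - tr a 1 ^ (2 * M + 1) * om M (tr a) 1 * tr b 0 = 0
    · refine gap hG ha hb hWa hWb hoff hcl (2 * M + 1) (by omega) (om' M (tr a)) (fun k => om'_mem M ha.tr_mem k) _ _
        (fun v k => (P v).B_om'_le M (by omega) _ _ (mx_nonneg P a v) (ha.B_le v) k) p2 ?_
      intro h1
      have hb0 := hb.tr_ne 0
      apply p3
      apply mul_right_cancel₀ hb0
      linear_combination (tr a 0 ^ (2 * M + 1) * om' M (tr a) 0) * h0 - (tr a 0 ^ (2 * M + 1) * om M (tr a) 0) * h1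
    · refine gap hG ha hb hWa hWb hoff hcl (2 * M + 1) (by omega) (om M (tr a)) (fun k => om_mem M ha.tr_mem k) _ _
        (fun v k => ((P v).B_om_le M (by omega) _ _ (mx_nonneg P a v) (ha.B_le v) k).trans ?_) p1 h0
      rw [Real.exp_le_exp]
      have := mx_nonneg P a v
      have : 0 ≤ (P v).c * Real.log 2 := by positivity
      linarith
  have h1 := hG.ht_le ha
  have h2 := hG.ht_le hb
  have hMr : (10 : ℝ) ≤ M := by exact_mod_cast hM10
  rw [min_eq_left (by rw [hWlam]; push_cast; gcongr; linarith)] at hfin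
  push_cast at hfin
  have hWb' : WW P b ≤ (2 * M + 3) * WW P a := by rw [hWlam]; gcongr; linarith
  have hx : dd P * Real.log 2 ≤ 0.6931471808 / 21 * WW P a := by
    have : dd P * Real.log 2 ≤ dd P * 0.6931471808 := by gcongr
    linarith
  have h1' : (3 * M + 2) * (3 * ht P a) ≤ (3 * M + 2) * (WW P a + dd P * Real.log 2) := by gcongr
  have hx' : (15 * M + 9) * (dd P * Real.log 2) ≤ (15 * M + 9) * (0.6931471808 / 21 * WW P a) := by gcongr
  have hMW : 10 * WW P a ≤ M * WW P a := by gcongr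
  nlinarith

/-- geometric growth -/
lemma chain {α : Type*} (W : α → ℝ) (G : Finset α) (hpos : ∀ a ∈ G, 0 < W a)
    (hg : ∀ a ∈ G, ∀ b ∈ G, a ≠ b → W a ≤ W b → 3 / 2 * W a ≤ W b) (hne : G.Nonempty) :
    ∃ a ∈ G, ∃ b ∈ G, (∀ c ∈ G, W c ≤ W b) ∧ (3 / 2 : ℝ) ^ (G.card - 1) * W a ≤ W b := by
  induction hn : G.card using Nat.strong_induction_on generalizing G with
  | _ n ih =>
    obtain ⟨b, hb, hmax⟩ := G.exists_max_image W hne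
    rcases (G.erase b).eq_empty_or_nonempty with he | he
    · refine ⟨b, hb, b, hb, hmax, ?_⟩
      have h1 := Finset.card_erase_of_mem hb
      rw [he, Finset.card_empty] at h1
      rw [← hn, ← h1]; simp
    · have h1 := Finset.card_erase_of_mem hb
      have h2 : 0 < G.card := Finset.card_pos.mpr hne
      have h3 : 0 < (G.erase b).card := Finset.card_pos.mpr he
      obtain ⟨a, ha, c, hc, hcm, hac⟩ := ih (G.erase b).card (by omega) (G.erase b)
        (fun a ha => hpos a (Finset.mem_of_mem_erase ha))
        (fun a ha b' hb' => hg a (Finset.mem_of_mem_erase ha) b' (Finset.mem_of_mem_erase hb')) he rfl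
      refine ⟨a, Finset.mem_of_mem_erase ha, b, hb, hmax, ?_⟩
      have h4 := hg c (Finset.mem_of_mem_erase hc) b hb (Finset.ne_of_mem_erase hc) (hmax c (Finset.mem_of_mem_erase hc))
      have h5 : n - 1 = ((G.erase b).card - 1) + 1 := by omega
      rw [h5, pow_succ]
      linarith

lemma class_card [CharZero K] (hG : Good P S R) (G : Finset K) (hsol : ∀ a ∈ G, IsSol R a)
    (hL : ∀ a ∈ G, 21 * dd P < WW P a) (hoff : ∀ a ∈ G, ∀ b ∈ G, ∀ v ∉ S, el P a v = el P b v)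
    (hcl : ∀ a ∈ G, ∀ b ∈ G, lcls P S a = lcls P S b) : G.card ≤ 8 := by
  rcases G.eq_empty_or_nonempty with rfl | hne
  · simp
  have hd := dd_pos hG
  have hpos : ∀ a ∈ G, 0 < WW P a := fun a ha => by have := hL a ha; linarith
  obtain ⟨a, ha, b, hb, -, h⟩ := chain (WW P) G hpos
    (fun a ha b hb hab hle => gap_small hG (hsol a ha) (hsol b hb) hab (hL a ha) hle (hoff a ha b hb) (hcl a ha b hb)) hne
  have h2 := gap_large hG (hsol a ha) (hsol b hb) (hL a ha) (hoff a ha b hb) (hcl a ha b hb)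
  by_contra! hc
  have h3 : (3 / 2 : ℝ) ^ 8 ≤ (3 / 2 : ℝ) ^ (G.card - 1) := pow_le_pow_right₀ (by norm_num) (by omega)
  have h4 := hpos a ha
  have : (3 / 2 : ℝ) ^ 8 * WW P a ≤ (3 / 2 : ℝ) ^ (G.card - 1) * WW P a := by gcongr
  norm_num at this
  linarith

lemma large_count [CharZero K] (hG : Good P S R) (F : Finset K) (hsol : ∀ a ∈ F, IsSol R a)
    (hL : ∀ a ∈ F, 21 * dd P < WW P a) (hoff : ∀ a ∈ F, ∀ b ∈ F, ∀ v ∉ S, el P a v = el P b v) :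
    (F.card : ℝ) ≤ 8 * 300 ^ S.card := by
  have hd := dd_pos hG
  have h := count_nat 3 F (lcls P S) (24 * S.card) (by
    intro a ha
    have hW : 0 < WW P a := by have := hL a ha; linarith
    have h1 : ((∑ v : S, (lcls P S a v).2 : ℕ) : ℝ) ≤ 24 * S.card := by
      push_cast
      calc _ ≤ ∑ v : S, 24 * S.card * wd (el P a v) / WW P a := by
            refine Finset.sum_le_sum fun v _ => ?_
            exact Nat.floor_le (by have := wd_nonneg (el P a v); positivity)
        _ = 24 * S.card * (∑ v ∈ S, wd (el P a v)) / WW P a := by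
            rw [← Finset.sum_div, ← Finset.mul_sum, Finset.sum_coe_sort S (fun v => wd (el P a v))]
        _ ≤ 24 * S.card * WW P a / WW P a := by
            gcongr
            exact Finset.sum_le_sum_of_subset_of_nonneg (Finset.subset_univ S) (fun v _ _ => wd_nonneg _)
        _ = _ := by field_simp
    exact_mod_cast h1) 8 (by
    intro a ha
    refine class_card hG _ (fun b hb => hsol b (Finset.mem_filter.mp hb).1) (fun b hb => hL b (Finset.mem_filter.mp hb).1)
      (fun b hb c hc => hoff b (Finset.mem_filter.mp hb).1 c (Finset.mem_filter.mp hc).1)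
      (fun b hb c hc => (Finset.mem_filter.mp hb).2.trans (Finset.mem_filter.mp hc).2.symm)) (24 / 25) (by norm_num) (by norm_num)
  rw [Fintype.card_coe, pow_mul] at h
  have h2 : (1 / 4 : ℝ) ^ S.card ≤ ((24 / 25 : ℝ) ^ 24) ^ S.card := by
    gcongr; norm_num
  have h3 : (F.card : ℝ) * (1 / 4) ^ S.card ≤ 8 * 75 ^ S.card := by
    calc _ ≤ (F.card : ℝ) * ((24 / 25 : ℝ) ^ 24) ^ S.card := by gcongr
      _ ≤ _ := by refine h.trans (le_of_eq ?_); norm_num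
  have h4 : (300 : ℝ) ^ S.card = 75 ^ S.card * 4 ^ S.card := by rw [← mul_pow]; norm_num
  have h5 : (1 / 4 : ℝ) ^ S.card * 4 ^ S.card = 1 := by rw [← mul_pow]; norm_num
  calc (F.card : ℝ) = F.card * (1 / 4) ^ S.card * 4 ^ S.card := by rw [mul_assoc, h5, mul_one]
    _ ≤ 8 * 75 ^ S.card * 4 ^ S.card := by gcongr
    _ = _ := by rw [h4]; ring

noncomputable def scls (P : ι → Plc K) (S : Finset ι) (a : K) (v : S) : Fin 14 × ℤ :=
  ((P v).ac a, ⌊(P v).lb a / (0.4 * dd P / S.card)⌋)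

lemma small_count (hG : Good P S R) (F : Finset K) (hsol : ∀ a ∈ F, IsSol R a)
    (hL : ∀ a ∈ F, WW P a ≤ 21 * dd P) (hoff : ∀ a ∈ F, ∀ b ∈ F, ∀ v ∉ S, el P a v = el P b v) :
    (F.card : ℝ) ≤ 4368 ^ S.card := by
  have hd := dd_pos hG
  have hs : (0 : ℝ) < S.card := by exact_mod_cast hG.S_pos
  set σ := 0.4 * dd P / S.card with hσ
  have hσ0 : 0 < σ := by positivity
  have el0 : ∀ a v, el P a v 0 = (P v).lb a := fun a v => by simp [el, tr]
  have hl := Real.log_two_lt_d9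
  have hl' := Real.log_two_gt_d9
  have h := count_int 14 F (scls P S) (38 * S.card) (by
    intro a ha
    have h1 := hG.sum_el (hsol a ha) 0
    have h2 := hG.ht_le (hsol a ha)
    have h3 := hL a ha
    have h4 : dd P * Real.log 2 ≤ dd P * 0.6931471808 := by gcongr
    simp only [el0] at h1
    have h5 : ∑ v, |(P v).lb a| ≤ 2 * ht P a := by
      have : ∀ v, |(P v).lb a| ≤ 2 * mx (el P a v) - (P v).lb a := by
        intro v
        have b1 := mx_nonneg P a v
        have b2 := le_mx (el P a v) 0
        rw [el0] at b2
        rcases abs_cases ((P v).lb a) with ⟨h, _⟩ | ⟨h, _⟩ <;> rw [h] <;> linarith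
      refine (Finset.sum_le_sum fun v _ => this v).trans ?_
      rw [Finset.sum_sub_distrib, h1, sub_zero, ← Finset.mul_sum]; rfl
    have h6 : ∑ v ∈ S, |(P v).lb a| ≤ ∑ v, |(P v).lb a| :=
      Finset.sum_le_sum_of_subset_of_nonneg (Finset.subset_univ S) (fun v _ _ => abs_nonneg _)
    have h7 : ((∑ v : S, ((scls P S a v).2.natAbs) : ℕ) : ℝ) ≤ 38 * S.card := by
      push_cast
      calc _ ≤ ∑ v : S, (|(P v).lb a| / σ + 1) := by
            refine Finset.sum_le_sum fun v _ => ?_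
            simp only [scls]
            rw [← hσ, Nat.cast_natAbs, Int.cast_abs]
            have e1 := Int.floor_le ((P v).lb a / σ)
            have e2 := Int.lt_floor_add_one ((P v).lb a / σ)
            have e3 : |(P v).lb a| / σ = |(P v).lb a / σ| := by rw [abs_div, abs_of_pos hσ0]
            rw [e3, abs_le]
            have e4 := neg_abs_le ((P v).lb a / σ)
            have e5 := le_abs_self ((P v).lb a / σ)
            constructor <;> linarith
        _ = (∑ v ∈ S, |(P v).lb a|) / σ + S.card := by
            rw [Finset.sum_add_distrib, ← Finset.sum_div, Finset.sum_coe_sort S (fun v => |(P v).lb a|)]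
            simp
        _ ≤ (37 * 0.4 * dd P) / σ + S.card := by
            gcongr
            linarith
        _ = _ := by rw [hσ]; field_simp; ring
    exact_mod_cast h7) 1 (by
    intro a0 ha0
    rw [Finset.card_le_one]
    intro a ha b hb
    rw [Finset.mem_filter] at ha hb
    by_contra hab
    have hcl : scls P S a = scls P S b := ha.2.trans hb.2.symm
    have sa := hsol a ha.1
    have sb := hsol b hb.1
    have h1 := hG.H1 (a - b) (R.sub_mem sa.aR sb.aR) (sub_ne_zero.mpr hab)
    have hac : ∀ v, (P v).c ≠ 0 → (P v).ac a = (P v).ac b := fun v hv =>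
      congrArg Prod.fst (congrFun hcl ⟨v, hG.hS v hv⟩)
    have h2 := Finset.sum_le_sum (s := Finset.univ) fun v _ => (P v).small_local sa.a0 sb.a0 hab (hac v)
    have sum1 := hG.sum_el sa 0
    have sum2 := hG.sum_el sb 0
    simp only [el0] at sum1 sum2
    rw [Finset.sum_add_distrib, Finset.sum_add_distrib, ← Finset.sum_div, Finset.sum_add_distrib, sum1, sum2,
      Finset.sum_neg_distrib, ← Finset.sum_mul, ← Finset.mul_sum] at h2
    have h3 : ∑ v, |(P v).lb a - (P v).lb b| ≤ 0.4 * dd P := by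
      rw [← Finset.sum_add_sum_compl S]
      have z : ∑ v ∈ Sᶜ, |(P v).lb a - (P v).lb b| = 0 := by
        refine Finset.sum_eq_zero fun v hv => ?_
        rw [← el0, ← el0, hoff a ha.1 b hb.1 v (by simpa using hv)]; simp
      rw [z, add_zero]
      calc _ ≤ ∑ v ∈ S, σ := by
            refine Finset.sum_le_sum fun v hv => ?_
            have hc := congrArg Prod.snd (congrFun hcl ⟨v, hv⟩)
            simp only [scls] at hc
            rw [← hσ] at hc
            have := Int.abs_sub_lt_one_of_floor_eq_floor hc
            rw [← sub_div, abs_div, abs_of_pos hσ0, div_lt_one hσ0] at this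
            exact this.le
        _ = _ := by rw [Finset.sum_const, nsmul_eq_mul, hσ]; field_simp
    have h4 : dd P * 0.6931471803 ≤ dd P * Real.log 2 := by gcongr
    change _ ≤ -(dd P * Real.log 2) + _ + _ at h2
    linarith) (38 / 39) (by norm_num) (by norm_num)
  rw [Fintype.card_coe, pow_mul] at h
  have h2 : (1 / 4 : ℝ) ^ S.card ≤ ((38 / 39 : ℝ) ^ 38) ^ S.card := by
    gcongr; norm_num
  have h3 : (F.card : ℝ) * (1 / 4) ^ S.card ≤ 1092 ^ S.card := by
    calc _ ≤ (F.card : ℝ) * ((38 / 39 : ℝ) ^ 38) ^ S.card := by gcongr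
      _ ≤ _ := by refine h.trans (le_of_eq ?_); norm_num
  have h4 : (4368 : ℝ) ^ S.card = 1092 ^ S.card * 4 ^ S.card := by rw [← mul_pow]; norm_num
  have h5 : (1 / 4 : ℝ) ^ S.card * 4 ^ S.card = 1 := by rw [← mul_pow]; norm_num
  calc (F.card : ℝ) = F.card * (1 / 4) ^ S.card * 4 ^ S.card := by rw [mul_assoc, h5, mul_one]
    _ ≤ 1092 ^ S.card * 4 ^ S.card := by gcongr
    _ = _ := by rw [h4]

/-- The main abstract theorem. -/
theorem main_count [CharZero K] (hG : Good P S R) (F : Finset K) (hsol : ∀ a ∈ F, IsSol R a)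
    (hoff : ∀ a ∈ F, ∀ b ∈ F, ∀ v ∉ S, el P a v = el P b v) : F.card ≤ 2 ^ (16 * S.card) := by
  have h1 := small_count hG (F.filter (fun a => WW P a ≤ 21 * dd P)) (fun a ha => hsol a (Finset.mem_filter.mp ha).1)
    (fun a ha => (Finset.mem_filter.mp ha).2)
    (fun a ha b hb => hoff a (Finset.mem_filter.mp ha).1 b (Finset.mem_filter.mp hb).1)
  have h2 := large_count hG (F.filter (fun a => ¬ WW P a ≤ 21 * dd P)) (fun a ha => hsol a (Finset.mem_filter.mp ha).1)
    (fun a ha => not_le.mp (Finset.mem_filter.mp ha).2)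
    (fun a ha b hb => hoff a (Finset.mem_filter.mp ha).1 b (Finset.mem_filter.mp hb).1)
  have h3 := Finset.card_filter_add_card_filter_not (s := F) (fun a => WW P a ≤ 21 * dd P)
  have hs := hG.S_pos
  have h4 : (F.card : ℝ) ≤ 4368 ^ S.card + 8 * 300 ^ S.card := by
    rw [← h3]; push_cast; linarith
  have h5 : (8 : ℝ) ≤ 8 ^ S.card := by
    calc (8 : ℝ) = 8 ^ 1 := by norm_num
      _ ≤ _ := pow_le_pow_right₀ (by norm_num) hs
  have h6 : (8 : ℝ) * 300 ^ S.card ≤ 4368 ^ S.card := by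
    calc (8 : ℝ) * 300 ^ S.card ≤ 8 ^ S.card * 300 ^ S.card := by gcongr
      _ = 2400 ^ S.card := by rw [← mul_pow]; norm_num
      _ ≤ _ := by gcongr; norm_num
  have h7 : (2 : ℝ) * 4368 ^ S.card ≤ 65536 ^ S.card := by
    have : (2 : ℝ) ≤ 2 ^ S.card := by
      calc (2 : ℝ) = 2 ^ 1 := by norm_num
        _ ≤ _ := pow_le_pow_right₀ (by norm_num) hs
    calc (2 : ℝ) * 4368 ^ S.card ≤ 2 ^ S.card * 4368 ^ S.card := by gcongr
      _ = 8736 ^ S.card := by rw [← mul_pow]; norm_num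
      _ ≤ _ := by gcongr; norm_num
  have h8 : (F.card : ℝ) ≤ (2 ^ (16 * S.card) : ℕ) := by
    push_cast
    rw [pow_mul]
    norm_num
    linarith
  exact_mod_cast h8

end ThreePt


namespace ThreePt
section NF
variable {K : Type*} [Field K] [NumberField K]

noncomputable def av (v : HeightOneSpectrum (𝓞 K)) : AbsoluteValue K ℝ := NumberField.HeightOneSpectrum.adicAbv K v

lemma av_add_le (v : HeightOneSpectrum (𝓞 K)) (x y : K) : av v (x + y) ≤ max (av v x) (av v y) :=
  NumberField.HeightOneSpectrum.isNonarchimedean_adicAbv K v x y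

lemma finprod_av (x : K) : ∏ᶠ w : FinitePlace K, w x = ∏ᶠ v : HeightOneSpectrum (𝓞 K), av v x := by
  rw [← finprod_comp_equiv FinitePlace.equivHeightOneSpectrum.symm]
  simp only [FinitePlace.equivHeightOneSpectrum_symm_apply, FinitePlace.norm_embedding]
  rfl

lemma av_supp {x : K} (hx : x ≠ 0) : {v : HeightOneSpectrum (𝓞 K) | av v x ≠ 1}.Finite := by
  have h := FinitePlace.hasFiniteMulSupport hx
  have : {v : HeightOneSpectrum (𝓞 K) | av v x ≠ 1} ⊆
      (FinitePlace.equivHeightOneSpectrum.symm) ⁻¹' (Function.mulSupport fun w : FinitePlace K => w x) := by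
    intro v hv
    simp only [Set.mem_preimage, Function.mem_mulSupport, FinitePlace.equivHeightOneSpectrum_symm_apply, FinitePlace.norm_embedding]
    exact hv
  refine Set.Finite.subset (Set.Finite.preimage ?_ h) this
  exact (Equiv.injective _).injOn

lemma exists_notMem (T : Finset (HeightOneSpectrum (𝓞 K))) : ∃ v, v ∉ T := by
  set N := ∏ v ∈ T, Ideal.absNorm v.asIdeal with hN
  obtain ⟨p, hpN, hp⟩ := Nat.exists_infinite_primes (N + 1)
  have hunit : Ideal.span {(p : 𝓞 K)} ≠ ⊤ := by
    intro h
    have h1 := Ideal.absNorm_eq_one_iff.mpr h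
    rw [Ideal.absNorm_span_singleton] at h1
    have h2 : Algebra.norm ℤ (p : 𝓞 K) = (p : ℤ) ^ Module.finrank ℤ (𝓞 K) := by
      have := Algebra.norm_algebraMap (R := ℤ) (S := 𝓞 K) (p : ℤ)
      simpa using this
    rw [h2, Int.natAbs_pow, Int.natAbs_natCast, Nat.pow_eq_one] at h1
    rcases h1 with h1 | h1
    · exact hp.one_lt.ne' h1
    · rw [NumberField.RingOfIntegers.rank] at h1
      exact (Module.finrank_pos (R := ℚ) (M := K)).ne' h1
  obtain ⟨m, hm, hle⟩ := Ideal.exists_le_maximal _ hunit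
  have hpm : (p : 𝓞 K) ∈ m := hle (Ideal.mem_span_singleton_self _)
  have hm0 : m ≠ ⊥ := by
    rintro rfl
    rw [Ideal.mem_bot, Nat.cast_eq_zero] at hpm
    exact hp.ne_zero hpm
  refine ⟨⟨m, hm.isPrime, hm0⟩, fun hT => ?_⟩
  have hNpos : 0 < N := Finset.prod_pos fun v _ => Nat.pos_of_ne_zero (by
    rw [Ne, Ideal.absNorm_eq_zero_iff]; exact v.ne_bot)
  have hNm : (N : 𝓞 K) ∈ m := by
    obtain ⟨k, hk⟩ := Finset.dvd_prod_of_mem (fun v : HeightOneSpectrum (𝓞 K) => Ideal.absNorm v.asIdeal) hT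
    rw [hN, hk, Nat.cast_mul]
    exact m.mul_mem_right _ (Ideal.absNorm_mem m)
  have hcop : Nat.Coprime p N := (Nat.Prime.coprime_iff_not_dvd hp).mpr fun h => by
    have := Nat.le_of_dvd hNpos h; omega
  have hbez := Nat.isCoprime_iff_coprime.mpr hcop
  obtain ⟨x, y, hxy⟩ := hbez
  apply hm.ne_top
  rw [Ideal.eq_top_iff_one]
  have : (1 : 𝓞 K) = (x : 𝓞 K) * p + (y : 𝓞 K) * N := by exact_mod_cast hxy.symm
  rw [this]
  exact m.add_mem (m.mul_mem_left _ hpm) (m.mul_mem_left _ hNm)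

/-- the ring of `Σ`-integers -/
def sint (Sg : Finset (HeightOneSpectrum (𝓞 K))) : Subring K where
  carrier := {x | ∀ v ∉ Sg, av v x ≤ 1}
  mul_mem' := fun {a b} ha hb v hv => by
    rw [map_mul]; exact mul_le_one₀ (ha v hv) ((av v).nonneg _) (hb v hv)
  one_mem' := fun v _ => by simp
  add_mem' := fun {a b} ha hb v hv => (av_add_le v a b).trans (max_le (ha v hv) (hb v hv))
  zero_mem' := fun v _ => by simp
  neg_mem' := fun {a} ha v hv => by rw [AbsoluteValue.map_neg]; exact ha v hv

noncomputable def plc (Sg : Finset (HeightOneSpectrum (𝓞 K))) : InfinitePlace K ⊕ Sg → Plc K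
  | Sum.inl w => ⟨w.1, w.mult, w.mult, InfinitePlace.mult_pos, Or.inl ⟨rfl, w.embedding, fun x =>
      (InfinitePlace.norm_embedding_eq w x).symm⟩⟩
  | Sum.inr v => ⟨av v.1, 1, 0, le_rfl, Or.inr ⟨rfl, av_add_le v.1⟩⟩

lemma sum_lb_nonneg (Sg : Finset (HeightOneSpectrum (𝓞 K))) (D : K) (hD : D ∈ sint Sg) (hD0 : D ≠ 0) :
    0 ≤ ∑ v, (plc Sg v).lb D := by
  have hpf := NumberField.prod_abs_eq_one hD0
  rw [finprod_av] at hpf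
  set U : Finset (HeightOneSpectrum (𝓞 K)) := Sg ∪ (av_supp hD0).toFinset with hU
  have h1 : ∏ᶠ v : HeightOneSpectrum (𝓞 K), av v D = ∏ v ∈ U, av v D := by
    apply finprod_eq_prod_of_mulSupport_subset
    intro v hv
    rw [hU, Finset.mem_coe, Finset.mem_union, Set.Finite.mem_toFinset]
    exact Or.inr hv
  have h2 : ∏ v ∈ U, av v D ≤ ∏ v ∈ Sg, av v D := by
    have hsub : Sg ⊆ U := Finset.subset_union_left
    rw [← Finset.prod_sdiff hsub]
    have : ∏ v ∈ U \ Sg, av v D ≤ 1 := Finset.prod_le_one (fun v _ => (av v).nonneg _) (fun v hv => hD v (Finset.mem_sdiff.mp hv).2)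
    have h0 : 0 ≤ ∏ v ∈ Sg, av v D := Finset.prod_nonneg fun v _ => (av v).nonneg _
    exact mul_le_of_le_one_left h0 this
  have h3 : 1 ≤ (∏ w : InfinitePlace K, w D ^ w.mult) * ∏ v ∈ Sg, av v D := by
    rw [← hpf, h1]
    gcongr
  have h4 : ∑ v, (plc Sg v).lb D = Real.log ((∏ w : InfinitePlace K, w D ^ w.mult) * ∏ v ∈ Sg, av v D) := by
    rw [Real.log_mul, Real.log_prod, Real.log_prod, Fintype.sum_sum_type]
    · congr 1
      rw [← Finset.sum_coe_sort Sg]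
      refine Finset.sum_congr rfl fun v _ => ?_
      simp [plc, Plc.lb, Plc.B]
    · intro v _; exact (av v).ne_zero hD0
    · intro w _; exact pow_ne_zero _ (by simpa using hD0)
    · exact Finset.prod_ne_zero_iff.mpr fun w _ => pow_ne_zero _ (by simpa using hD0)
    · exact Finset.prod_ne_zero_iff.mpr fun v _ => (av v).ne_zero hD0
  rw [h4]
  exact Real.log_nonneg h3

theorem nf_count (T : Finset (HeightOneSpectrum (𝓞 K))) (F : Finset K) (h0 : ∀ a ∈ F, a ≠ 0) (h1 : ∀ a ∈ F, 1 - a ≠ 0)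
    (hoff : ∀ a ∈ F, ∀ b ∈ F, ∀ v ∉ T, av v a = av v b)
    (hoff' : ∀ a ∈ F, ∀ b ∈ F, ∀ v ∉ T, av v (1 - a) = av v (1 - b)) :
    F.card ≤ 2 ^ (16 * (T.card + Fintype.card (InfinitePlace K))) := by
  have hfin : (⋃ a ∈ F, {v : HeightOneSpectrum (𝓞 K) | av v a ≠ 1 ∨ av v (1 - a) ≠ 1}).Finite :=
    Set.Finite.biUnion F.finite_toSet fun a ha => (av_supp (h0 a ha)).union (av_supp (h1 a ha))
  set Sg := T ∪ hfin.toFinset with hSg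
  have hone : ∀ a ∈ F, ∀ v ∉ Sg, av v a = 1 ∧ av v (1 - a) = 1 := by
    intro a ha v hv
    by_contra hc
    apply hv
    rw [hSg, Finset.mem_union, Set.Finite.mem_toFinset]
    right
    simp only [Set.mem_iUnion]
    exact ⟨a, ha, by simp only [Set.mem_setOf_eq]; tauto⟩
  let S : Finset (InfinitePlace K ⊕ Sg) := Finset.disjSum Finset.univ (Finset.univ.filter fun v : Sg => v.1 ∈ T)
  have hcard : S.card ≤ T.card + Fintype.card (InfinitePlace K) := by
    simp only [S, Finset.card_disjSum, Finset.card_univ]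
    rw [add_comm]
    gcongr
    refine Finset.card_le_card_of_injOn (fun v => v.1) (fun v hv => ?_) (fun v _ w _ h => Subtype.ext h)
    exact (Finset.mem_filter.mp hv).2
  have hcard' : Fintype.card (InfinitePlace K) ≤ S.card := by
    simp only [S, Finset.card_disjSum, Finset.card_univ]; omega
  have hsum : ∑ v, (plc Sg v).c = Module.finrank ℚ K := by
    rw [Fintype.sum_sum_type, ← InfinitePlace.sum_mult_eq]
    simp [plc]
  have hG : Good (plc Sg) S (sint Sg) := by
    refine ⟨sum_lb_nonneg Sg, ?_, ?_, ?_⟩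
    · rw [hsum]; exact Module.finrank_pos
    · rw [hsum, ← InfinitePlace.sum_mult_eq]
      calc ∑ w : InfinitePlace K, w.mult ≤ ∑ w : InfinitePlace K, 2 := Finset.sum_le_sum fun w _ => by
            unfold InfinitePlace.mult; split_ifs <;> omega
        _ ≤ _ := by rw [Finset.sum_const, Finset.card_univ, smul_eq_mul]; omega
    · rintro (w | v) hv
      · simp [S]
      · exact absurd rfl hv
  refine (main_count hG F ?_ ?_).trans (Nat.pow_le_pow_right (by norm_num) (by omega))
  · intro a ha
    have hh := hone a ha
    refine ⟨h0 a ha, h1 a ha, fun v hv => (hh v hv).1.le, fun v hv => (hh v hv).2.le, fun v hv => ?_, fun v hv => ?_⟩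
    · rw [map_inv₀, (hh v hv).1, inv_one]
    · rw [map_inv₀, (hh v hv).2, inv_one]
  · rintro a ha b hb (w | v) hv
    · simp [S] at hv
    · have hvT : v.1 ∉ T := by simpa [S] using hv
      funext i
      have e1 := hoff a ha b hb v.1 hvT
      have e2 := hoff' a ha b hb v.1 hvT
      fin_cases i
      · simp [el, tr, plc, Plc.lb, Plc.B, e1]
      · simp [el, tr, plc, Plc.lb, Plc.B, e2]
      · simp [el, tr]


lemma val_eq (v : HeightOneSpectrum (𝓞 K)) {x : K} (hx : x ≠ 0) :
    v.valuation K x = ((Multiplicative.ofAdd (-ordAt v x) : Multiplicative ℤ) : WithZero (Multiplicative ℤ)) := by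
  rw [ordAt, dif_neg hx, neg_neg, ofAdd_toAdd, WithZero.coe_unzero]

lemma ordAt_mul (v : HeightOneSpectrum (𝓞 K)) {x y : K} (hx : x ≠ 0) (hy : y ≠ 0) :
    ordAt v (x * y) = ordAt v x + ordAt v y := by
  have h := map_mul (v.valuation K) x y
  rw [val_eq v hx, val_eq v hy, val_eq v (mul_ne_zero hx hy), ← WithZero.coe_mul, WithZero.coe_inj, ← ofAdd_add] at h
  have := Multiplicative.ofAdd.injective h
  linarith

lemma av_eq_of_ord (v : HeightOneSpectrum (𝓞 K)) {x y : K} (hx : x ≠ 0) (hy : y ≠ 0) (h : ordAt v x = ordAt v y) :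
    av v x = av v y := by
  have : v.valuation K x = v.valuation K y := by rw [val_eq v hx, val_eq v hy, h]
  unfold av
  rw [NumberField.HeightOneSpectrum.adicAbv_def, NumberField.HeightOneSpectrum.adicAbv_def, this]

noncomputable def dt (P Q : P1 K) : K := P.rep 0 * Q.rep 1 - P.rep 1 * Q.rep 0

lemma dt_ne {P Q : P1 K} (h : P ≠ Q) : dt P Q ≠ 0 := by
  intro h0
  apply h
  unfold dt at h0
  rw [← P.mk_rep, ← Q.mk_rep, Projectivization.mk_eq_mk_iff']
  have hQ := Q.rep_nonzero
  by_cases h1 : Q.rep 0 = 0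
  · have h2 : Q.rep 1 ≠ 0 := by
      intro h2; apply hQ; funext i; fin_cases i
      · exact h1
      · exact h2
    refine ⟨P.rep 1 / Q.rep 1, ?_⟩
    funext i
    fin_cases i
    · have : P.rep 0 = 0 := by
        rw [h1, mul_zero, sub_zero] at h0
        exact (mul_eq_zero.mp h0).resolve_right h2
      simp [h1, this]
    · simp [h2]
  · refine ⟨P.rep 0 / Q.rep 0, ?_⟩
    funext i
    fin_cases i
    · simp [h1]
    · simp only [Pi.smul_apply, smul_eq_mul]
      show P.rep 0 / Q.rep 0 * Q.rep 1 = P.rep 1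
      field_simp
      linear_combination h0

end NF
end ThreePt

open ThreePt

/-- **Three-Point Lemma C.** Given three distinct points `Q₁, Q₂, Q₃ ∈ ℙ¹(K)`, the set
`𝒯 = {P ∈ ℙ¹(K) : δ_𝔭(P,Q₁) = δ_𝔭(P,Q₂) = δ_𝔭(P,Q₃) ∀𝔭 ∉ S}` is finite with cardinality
at most `B(|S|) = 2^{16|S|}`. -/
theorem three_point_lemma_C
    {K : Type*} [Field K] [NumberField K]
    (T : Finset (HeightOneSpectrum (𝓞 K)))
    (Q : Fin 3 → P1 K) (hQ : Function.Injective Q) :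
    {P : P1 K | ∀ v ∉ T,
        logDist v P (Q 0) = logDist v P (Q 1) ∧
        logDist v P (Q 1) = logDist v P (Q 2)}.Finite ∧
      {P : P1 K | ∀ v ∉ T,
        logDist v P (Q 0) = logDist v P (Q 1) ∧
        logDist v P (Q 1) = logDist v P (Q 2)}.ncard ≤ Bconst (sCard K T) := by
  set X := {P : P1 K | ∀ v ∉ T,
        logDist v P (Q 0) = logDist v P (Q 1) ∧
        logDist v P (Q 1) = logDist v P (Q 2)} with hX
  have h01 : Q 0 ≠ Q 1 := hQ.ne (by decide)
  have h12 : Q 1 ≠ Q 2 := hQ.ne (by decide)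
  have h20 : Q 2 ≠ Q 0 := hQ.ne (by decide)
  obtain ⟨v0, hv0⟩ := exists_notMem T
  have hne : ∀ P ∈ X, P ≠ Q 0 ∧ P ≠ Q 1 ∧ P ≠ Q 2 := by
    intro P hP
    obtain ⟨e1, e2⟩ := hP v0 hv0
    unfold logDist at e1 e2
    refine ⟨?_, ?_, ?_⟩
    · rintro rfl
      rw [if_pos rfl, if_neg h01] at e1
      exact WithTop.top_ne_coe e1
    · rintro rfl
      rw [if_pos rfl, if_neg h12] at e2
      exact WithTop.top_ne_coe e2
    · rintro rfl
      rw [if_pos rfl, if_neg h12.symm] at e2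
      exact WithTop.coe_ne_top e2
  have hord : ∀ P ∈ X, ∀ v ∉ T,
      ordAt v (dt P (Q 0)) - minOrd v ((Q 0).rep 0) ((Q 0).rep 1) = ordAt v (dt P (Q 2)) - minOrd v ((Q 2).rep 0) ((Q 2).rep 1) ∧
      ordAt v (dt P (Q 1)) - minOrd v ((Q 1).rep 0) ((Q 1).rep 1) = ordAt v (dt P (Q 2)) - minOrd v ((Q 2).rep 0) ((Q 2).rep 1) := by
    intro P hP v hv
    obtain ⟨n0, n1, n2⟩ := hne P hP
    obtain ⟨e1, e2⟩ := hP v hv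
    unfold logDist at e1 e2
    rw [if_neg n0, if_neg n1] at e1
    rw [if_neg n1, if_neg n2] at e2
    have e1' := WithTop.coe_injective e1
    have e2' := WithTop.coe_injective e2
    unfold dt
    constructor <;> linarith
  set f : P1 K → K := fun P => -(dt (Q 1) (Q 2) * dt P (Q 0)) / (dt (Q 0) (Q 1) * dt P (Q 2)) with hf
  have c0 := dt_ne h12
  have c1 := dt_ne h20
  have c2 := dt_ne h01
  have hf1 : ∀ P ∈ X, 1 - f P = -(dt (Q 2) (Q 0) * dt P (Q 1)) / (dt (Q 0) (Q 1) * dt P (Q 2)) := by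
    intro P hP
    obtain ⟨n0, n1, n2⟩ := hne P hP
    have l2 := dt_ne n2
    rw [hf, eq_div_iff (mul_ne_zero c2 l2), sub_mul]
    simp only
    rw [div_mul_cancel₀ _ (mul_ne_zero c2 l2)]
    unfold dt
    ring
  have hord_f : ∀ (c l c' l' : K), c ≠ 0 → l ≠ 0 → c' ≠ 0 → l' ≠ 0 → ∀ v : HeightOneSpectrum (𝓞 K),
      ordAt v (-(c * l) / (c' * l')) = ordAt v (-c) + ordAt v l - ordAt v c' - ordAt v l' := by
    intro c l c' l' hc hl hc' hl' v
    have hh : -(c * l) / (c' * l') ≠ 0 := div_ne_zero (neg_ne_zero.mpr (mul_ne_zero hc hl)) (mul_ne_zero hc' hl')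
    have e : -(c * l) / (c' * l') * (c' * l') = -c * l := by
      rw [div_mul_cancel₀ _ (mul_ne_zero hc' hl')]; ring
    have := congrArg (ordAt v) e
    rw [ordAt_mul v hh (mul_ne_zero hc' hl'), ordAt_mul v hc' hl', ordAt_mul v (neg_ne_zero.mpr hc) hl] at this
    linarith
  have hf0ne : ∀ P ∈ X, f P ≠ 0 := by
    intro P hP
    obtain ⟨n0, n1, n2⟩ := hne P hP
    exact div_ne_zero (neg_ne_zero.mpr (mul_ne_zero c0 (dt_ne n0))) (mul_ne_zero c2 (dt_ne n2))
  have hf1ne : ∀ P ∈ X, 1 - f P ≠ 0 := by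
    intro P hP
    obtain ⟨n0, n1, n2⟩ := hne P hP
    rw [hf1 P hP]
    exact div_ne_zero (neg_ne_zero.mpr (mul_ne_zero c1 (dt_ne n1))) (mul_ne_zero c2 (dt_ne n2))
  have hinj : Set.InjOn f X := by
    intro P hP P' hP' h
    obtain ⟨n0, n1, n2⟩ := hne P hP
    obtain ⟨n0', n1', n2'⟩ := hne P' hP'
    by_contra hPP
    have d1 := dt_ne hPP
    have l2 := dt_ne n2
    have l2' := dt_ne n2'
    simp only [hf] at h
    rw [div_eq_div_iff (mul_ne_zero c2 l2) (mul_ne_zero c2 l2')] at h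
    have h' : dt (Q 1) (Q 2) * dt (Q 0) (Q 1) * (dt P (Q 0) * dt P' (Q 2) - dt P' (Q 0) * dt P (Q 2)) = 0 := by
      linear_combination -h
    have h3 := (mul_eq_zero.mp h').resolve_left (mul_ne_zero c0 c2)
    have h4 : dt P (Q 0) * dt P' (Q 2) - dt P' (Q 0) * dt P (Q 2) = - (dt P P' * dt (Q 2) (Q 0)) := by
      unfold dt; ring
    rw [h4] at h3
    exact neg_ne_zero.mpr (mul_ne_zero d1 c1) h3
  have hmain : ∀ G : Finset (P1 K), (↑G : Set (P1 K)) ⊆ X → G.card ≤ Bconst (sCard K T) := by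
    intro G hGX
    rw [← Finset.card_image_of_injOn (hinj.mono hGX)]
    refine nf_count T _ ?_ ?_ ?_ ?_
    · intro a ha
      obtain ⟨P, hP, rfl⟩ := Finset.mem_image.mp ha
      exact hf0ne P (hGX hP)
    · intro a ha
      obtain ⟨P, hP, rfl⟩ := Finset.mem_image.mp ha
      exact hf1ne P (hGX hP)
    · intro a ha b hb v hv
      obtain ⟨P, hP, rfl⟩ := Finset.mem_image.mp ha
      obtain ⟨P', hP', rfl⟩ := Finset.mem_image.mp hb
      replace hP := hGX hP
      replace hP' := hGX hP'
      obtain ⟨n0, n1, n2⟩ := hne P hP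
      obtain ⟨n0', n1', n2'⟩ := hne P' hP'
      apply av_eq_of_ord v (hf0ne P hP) (hf0ne P' hP')
      have q1 := (hord P hP v hv).1
      have q2 := (hord P' hP' v hv).1
      simp only [hf]
      rw [hord_f _ _ _ _ c0 (dt_ne n0) c2 (dt_ne n2), hord_f _ _ _ _ c0 (dt_ne n0') c2 (dt_ne n2')]
      linarith
    · intro a ha b hb v hv
      obtain ⟨P, hP, rfl⟩ := Finset.mem_image.mp ha
      obtain ⟨P', hP', rfl⟩ := Finset.mem_image.mp hb
      replace hP := hGX hP
      replace hP' := hGX hP'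
      obtain ⟨n0, n1, n2⟩ := hne P hP
      obtain ⟨n0', n1', n2'⟩ := hne P' hP'
      apply av_eq_of_ord v (hf1ne P hP) (hf1ne P' hP')
      have q1 := (hord P hP v hv).2
      have q2 := (hord P' hP' v hv).2
      rw [hf1 P hP, hf1 P' hP', hord_f _ _ _ _ c1 (dt_ne n1) c2 (dt_ne n2), hord_f _ _ _ _ c1 (dt_ne n1') c2 (dt_ne n2')]
      linarith
  have hfinite : X.Finite := by
    by_contra hinf
    obtain ⟨G, hG, hGc⟩ := Set.Infinite.exists_subset_card_eq hinf (Bconst (sCard K T) + 1)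
    have := hmain G hG
    omega
  refine ⟨hfinite, ?_⟩
  rw [Set.ncard_eq_toFinset_card X hfinite]
  exact hmain _ (by simp)
end

section
/- Let K be a number field, S a finite set of places of K containing all the archimedean ones, R_S the ring of S-integers, h the class number of R_S, and let a₁,…,a_h be integral ideals representing the ideal classes of R_S, with a_i^h = α_i R_S for S-integers α_i. Let L = K(ζ, α₁^{1/h}, …, α_h^{1/h}) where ζ is a primitive h-th root of unity, let 𝕊 be the places of L above S, R_𝕊 the ring of 𝕊-integers of L, and √(K*) the radical of K* in L*. Then there exists a choice of homogeneous coordinates [x_P : y_P] ∈ ℙ¹(L) for every point P ∈ ℙ¹(K) such that: (a) for every P, x_P, y_P ∈ √(K*) and x_P R_𝕊 + y_P R_𝕊 = R_𝕊; and (b) for all P, Q ∈ ℙ¹(K), x_P y_Q − y_P x_Q ∈ √(K*). -/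
open NumberField IsDedekindDomain MvPolynomial
open scoped Classical nonZeroDivisors

set_option synthInstance.maxHeartbeats 1000000
set_option maxHeartbeats 1000000

theorem aux_mem_of_val {K L : Type*} [Field K] [NumberField K] [Field L] [NumberField L]
    [Algebra K L] (w : HeightOneSpectrum (𝓞 L)) (v : HeightOneSpectrum (𝓞 K))
    (hv : Ideal.comap (algebraMap (𝓞 K) (𝓞 L)) w.asIdeal = v.asIdeal)
    (k : K) (hk : v.valuation K k ≤ 1) : w.valuation L (algebraMap K L k) ≤ 1 := by
  obtain ⟨n, d, hnd⟩ := v.exists_primeCompl_mul_eq_of_integer k hk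
  have hd : algebraMap (𝓞 K) (𝓞 L) (d : 𝓞 K) ∉ w.asIdeal := by
    intro hmem
    have h1 : (d : 𝓞 K) ∈ Ideal.comap (algebraMap (𝓞 K) (𝓞 L)) w.asIdeal := hmem
    exact d.2 (hv.le h1)
  have hd1 := (w.valuation_eq_one_iff_notMem (K := L)).2 hd
  have hn1 := w.valuation_le_one (K := L) (algebraMap (𝓞 K) (𝓞 L) n)
  have e : algebraMap K L k * algebraMap (𝓞 L) L (algebraMap (𝓞 K) (𝓞 L) (d : 𝓞 K))
      = algebraMap (𝓞 L) L (algebraMap (𝓞 K) (𝓞 L) n) := by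
    rw [← IsScalarTower.algebraMap_apply, ← IsScalarTower.algebraMap_apply,
      IsScalarTower.algebraMap_apply (𝓞 K) K L, IsScalarTower.algebraMap_apply (𝓞 K) K L,
      ← map_mul]
    congr 1
  have e2 := congrArg (w.valuation L) e
  rw [map_mul] at e2
  have hd1' : w.valuation L (algebraMap (𝓞 L) L (algebraMap (𝓞 K) (𝓞 L) (d : 𝓞 K))) = 1 := hd1
  rw [hd1', mul_one] at e2
  rw [e2]
  exact hn1

theorem aux_integer {K L : Type*} [Field K] [NumberField K] [Field L] [NumberField L]
    [Algebra K L] (T : Set (HeightOneSpectrum (𝓞 K)))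
    (SS : Set (HeightOneSpectrum (𝓞 L)))
    (hSS : SS = {w | ∃ v ∈ T, Ideal.comap (algebraMap (𝓞 K) (𝓞 L)) w.asIdeal = v.asIdeal})
    (k : K) (hk : k ∈ T.integer K) : algebraMap K L k ∈ SS.integer L := by
  intro w hw
  have hprime : (Ideal.comap (algebraMap (𝓞 K) (𝓞 L)) w.asIdeal).IsPrime :=
    Ideal.comap_isPrime _ _
  have hne : Ideal.comap (algebraMap (𝓞 K) (𝓞 L)) w.asIdeal ≠ ⊥ :=
    mt Ideal.eq_bot_of_comap_eq_bot w.ne_bot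
  let v : HeightOneSpectrum (𝓞 K) := ⟨_, hprime, hne⟩
  refine aux_mem_of_val w v rfl k (hk v fun hv => hw ?_)
  rw [hSS]
  exact ⟨v, hv, rfl⟩

theorem aux_root {L : Type*} [Field L] [NumberField L]
    (SS : Set (HeightOneSpectrum (𝓞 L))) (x : L) (n : ℕ) (hn : 0 < n)
    (hx : x ^ n ∈ SS.integer L) : x ∈ SS.integer L := by
  intro w hw
  have := hx w hw
  rw [map_pow] at this
  exact (pow_le_one_iff hn.ne').1 this

theorem aux_span {R L A : Type*} [CommRing R] [Field L] [CommRing A] [Algebra A L]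
    (B : Subalgebra A L) (f : R →+* L) (hf : ∀ r, f r ∈ B) (p q : R) (b : L)
    (hp : f p / b ∈ B) (hq : f q / b ∈ B) (n : ℕ) :
    ∀ z ∈ Ideal.span {p, q} ^ (n + 1),
      ∃ r ∈ B, ∃ s ∈ B, f z / b ^ (n + 1) = f p / b * r + f q / b * s := by
  induction n with
  | zero =>
    intro z hz
    rw [zero_add, pow_one] at hz
    obtain ⟨u, v, rfl⟩ := Ideal.mem_span_pair.1 hz
    refine ⟨f u, hf u, f v, hf v, ?_⟩
    simp only [map_add, map_mul]
    ring
  | succ n ih =>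
    intro z hz
    rw [pow_succ] at hz
    refine Submodule.mul_induction_on hz ?_ ?_
    · intro m hm t ht
      obtain ⟨r, hr, s, hs, e⟩ := ih m hm
      obtain ⟨u, v, rfl⟩ := Ideal.mem_span_pair.1 ht
      have ht' : f (u * p + v * q) / b ∈ B := by
        have : f (u * p + v * q) / b = f u * (f p / b) + f v * (f q / b) := by
          simp only [map_add, map_mul]; ring
        rw [this]
        exact B.add_mem (B.mul_mem (hf u) hp) (B.mul_mem (hf v) hq)
      refine ⟨_, B.mul_mem hr ht', _, B.mul_mem hs ht', ?_⟩
      rw [← mul_assoc, ← mul_assoc, ← add_mul, ← e, map_mul, pow_succ b (n + 1),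
        div_mul_div_comm]
    · rintro z₁ z₂ ⟨r, hr, s, hs, e⟩ ⟨r', hr', s', hs', e'⟩
      refine ⟨_, B.add_mem hr hr', _, B.add_mem hs hs', ?_⟩
      rw [map_add, add_div, e, e']
      ring

open TensorProduct in
/-- **Lemma (S-radical coprime coordinates).** Let `R_S` be the ring of `S`-integers of `K`,
`h` its class number, `a₁,…,a_h` integral ideal representatives of the ideal classes with
`aᵢ^h = αᵢ R_S`, and `L = K(ζ, α₁^{1/h}, …, α_h^{1/h})` with `ζ` a primitive `h`-th root of
unity. Let `𝕊` be the places of `L` above `S` and `R_𝕊` the `𝕊`-integers of `L`. Then every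
`P ∈ ℙ¹(K)` admits homogeneous coordinates `[x_P : y_P] ∈ ℙ¹(L)` such that
(a) `x_P, y_P` lie in the radical of `K` in `L` and `x_P R_𝕊 + y_P R_𝕊 = R_𝕊`, and
(b) for distinct `P, Q`, `x_P y_Q - y_P x_Q` lies in the radical of `K*` in `L*`. -/
theorem s_radical_coprime_coordinates
    {K : Type*} [Field K] [NumberField K]
    (T : Finset (HeightOneSpectrum (𝓞 K)))
    (RS : Subalgebra (𝓞 K) K)
    (hRS : RS = (T : Set (HeightOneSpectrum (𝓞 K))).integer K)
    [IsDedekindDomain ↥RS]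
    (h : ℕ) (hpos : 0 < h)
    (hcard : Nat.card (ClassGroup ↥RS) = h)
    (a : Fin h → Ideal ↥RS)
    (ha : ∀ i, a i ∈ (Ideal ↥RS)⁰)
    (hrep : ∀ c : ClassGroup ↥RS, ∃ i, ClassGroup.mk0 ⟨a i, ha i⟩ = c)
    (α : Fin h → ↥RS)
    (hα : ∀ i, a i ^ h = Ideal.span {α i})
    (L : Type*) [Field L] [NumberField L] [Algebra K L]
    (ζ : L) (hζ : IsPrimitiveRoot ζ h)
    (β : Fin h → L) (hβ : ∀ i, β i ^ h = algebraMap K L ((α i : K)))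
    (hL : IntermediateField.adjoin K ({ζ} ∪ Set.range β) = ⊤)
    (SS : Set (HeightOneSpectrum (𝓞 L)))
    (hSS : SS = {w | ∃ v ∈ T, Ideal.comap (algebraMap (𝓞 K) (𝓞 L)) w.asIdeal = v.asIdeal})
    (RSS : Subalgebra (𝓞 L) L) (hRSS : RSS = SS.integer L) :
    ∃ x y : P1 K → L,
      -- `[x_P : y_P]` are homogeneous coordinates for `P`, viewed in `ℙ¹(L)`
      (∀ P : P1 K, ∃ c : L, c ≠ 0 ∧
          x P = c * algebraMap K L (P.rep 0) ∧ y P = c * algebraMap K L (P.rep 1)) ∧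
      -- (a) the coordinates lie in the radical of `K` in `L` ...
      (∀ P : P1 K,
        (∃ n : ℕ, 0 < n ∧ ∃ k : K, algebraMap K L k = x P ^ n) ∧
        (∃ n : ℕ, 0 < n ∧ ∃ k : K, algebraMap K L k = y P ^ n)) ∧
      -- ... and `x_P R_𝕊 + y_P R_𝕊 = R_𝕊`
      (∀ P : P1 K,
        {z : L | ∃ r ∈ RSS, ∃ s ∈ RSS, z = x P * r + y P * s} = (RSS : Set L)) ∧
      -- (b) cross terms lie in the radical of `K*` in `L*`
      (∀ P Q : P1 K, P ≠ Q →
        x P * y Q - y P * x Q ≠ 0 ∧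
        ∃ n : ℕ, 0 < n ∧ ∃ k : K, algebraMap K L k = (x P * y Q - y P * x Q) ^ n) := by
  have hRS_alg : ∀ k : ↥RS, algebraMap K L (k : K) ∈ RSS := by
    intro k
    rw [hRSS]
    exact aux_integer _ SS hSS k (hRS ▸ k.2)
  have hα0 : ∀ i, (α i : K) ≠ 0 := by
    intro i h0
    have h1 : α i = 0 := Subtype.ext h0
    have h2 := hα i
    rw [h1, Ideal.span_singleton_zero] at h2
    exact nonZeroDivisors.ne_zero (ha i) (pow_eq_zero_iff hpos.ne' |>.1 h2)
  have hβ0 : ∀ i, β i ≠ 0 := by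
    intro i h0
    have := hβ i
    rw [h0, zero_pow hpos.ne'] at this
    exact hα0 i ((map_eq_zero _).1 this.symm)
  have main : ∀ P : P1 K, ∃ c : L, c ≠ 0 ∧ (∃ k : K, algebraMap K L k = c ^ h) ∧
      c * algebraMap K L (P.rep 0) ∈ RSS ∧ c * algebraMap K L (P.rep 1) ∈ RSS ∧
      ∃ r ∈ RSS, ∃ s ∈ RSS, (1 : L) =
        c * algebraMap K L (P.rep 0) * r + c * algebraMap K L (P.rep 1) * s := by
    intro P
    obtain ⟨⟨d, hd⟩, hint⟩ := IsLocalization.exist_integer_multiples_of_finset (𝓞 K)⁰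
      ({P.rep 0, P.rep 1} : Finset K)
    obtain ⟨p₀, hp₀⟩ := hint (P.rep 0) (by simp)
    obtain ⟨q₀, hq₀⟩ := hint (P.rep 1) (by simp)
    have hd0 : algebraMap (𝓞 K) K d ≠ 0 := by
      simpa using nonZeroDivisors.ne_zero hd
    have hp₀' : algebraMap (𝓞 K) K p₀ = algebraMap (𝓞 K) K d * P.rep 0 := by
      rw [hp₀]; exact Algebra.smul_def _ _
    have hq₀' : algebraMap (𝓞 K) K q₀ = algebraMap (𝓞 K) K d * P.rep 1 := by
      rw [hq₀]; exact Algebra.smul_def _ _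
    let p : ↥RS := algebraMap (𝓞 K) ↥RS p₀
    let q : ↥RS := algebraMap (𝓞 K) ↥RS q₀
    have hp : (p : K) = algebraMap (𝓞 K) K d * P.rep 0 := hp₀'
    have hq : (q : K) = algebraMap (𝓞 K) K d * P.rep 1 := hq₀'
    have hJ : Ideal.span {p, q} ≠ (⊥ : Ideal ↥RS) := by
      intro hbot
      rw [Ideal.span_eq_bot] at hbot
      have h1 : p = 0 := hbot p (by simp)
      have h2 : q = 0 := hbot q (by simp)
      apply P.rep_nonzero
      rw [h1] at hp
      rw [h2] at hq
      funext j
      fin_cases j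
      · simpa [hd0] using hp.symm
      · simpa [hd0] using hq.symm
    obtain ⟨i, hi⟩ := hrep (ClassGroup.mk0 ⟨_, mem_nonZeroDivisors_iff_ne_zero.2 hJ⟩)
    obtain ⟨u, v, hu, hv, huv⟩ := ClassGroup.mk0_eq_mk0_iff.1 hi
    -- `u a_i = v (p, q)`
    change Ideal.span {u} * a i = Ideal.span {v} * Ideal.span {p, q} at huv
    have hmem : ∀ t ∈ ({p, q} : Set ↥RS), ∃ t' : ↥RS, u * t' = v * t := by
      intro t ht
      have : v * t ∈ Ideal.span {u} * a i := by
        rw [huv]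
        exact Ideal.mul_mem_mul (Ideal.mem_span_singleton_self v) (Ideal.subset_span ht)
      obtain ⟨t', -, e⟩ := Ideal.mem_span_singleton_mul.1 this
      exact ⟨t', e⟩
    obtain ⟨p', hp'⟩ := hmem p (by simp)
    obtain ⟨q', hq'⟩ := hmem q (by simp)
    have hspan : a i = Ideal.span {p', q'} := by
      apply Ideal.span_singleton_mul_right_injective hu
      change Ideal.span {u} * a i = Ideal.span {u} * Ideal.span {p', q'}
      rw [huv, Ideal.span_mul_span', Ideal.span_mul_span', Set.singleton_mul, Set.singleton_mul,
        Set.image_pair, Set.image_pair, hp', hq']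
    have huK : (u : K) ≠ 0 := fun e => hu (Subtype.ext e)
    have hvK : (v : K) ≠ 0 := fun e => hv (Subtype.ext e)
    let f : ↥RS →+* L := (algebraMap K L).comp RS.val.toRingHom
    have hf : ∀ r : ↥RS, f r = algebraMap K L (r : K) := fun r => rfl
    let g : K := v * algebraMap (𝓞 K) K d / u
    have hg : g ≠ 0 := div_ne_zero (mul_ne_zero hvK hd0) huK
    have hgp : (p' : K) = g * P.rep 0 := by
      have : (u : K) * p' = v * p := by exact_mod_cast congrArg Subtype.val hp'
      rw [hp] at this
      simp only [g]
      field_simp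
      linear_combination this
    have hgq : (q' : K) = g * P.rep 1 := by
      have : (u : K) * q' = v * q := by exact_mod_cast congrArg Subtype.val hq'
      rw [hq] at this
      simp only [g]
      field_simp
      linear_combination this
    have hfα : f (α i) = β i ^ h := (hβ i).symm
    have hint : ∀ t ∈ a i, f t / β i ∈ RSS := by
      intro t ht
      have : t ^ h ∈ Ideal.span {α i} := by
        rw [← hα i]; exact Ideal.pow_mem_pow ht h
      obtain ⟨s, hs⟩ := Ideal.mem_span_singleton'.1 this
      have e : (f t / β i) ^ h = f s := by
        rw [div_pow, ← map_pow, ← hs, map_mul, hfα, mul_div_cancel_right₀]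
        exact pow_ne_zero _ (hβ0 i)
      have h2 : f s ∈ RSS := hRS_alg s
      rw [hRSS] at h2 ⊢
      exact aux_root SS _ h hpos (e ▸ h2)
    have hpI := hint p' (hspan ▸ Ideal.subset_span (by simp))
    have hqI := hint q' (hspan ▸ Ideal.subset_span (by simp))
    have ex : algebraMap K L g / β i * algebraMap K L (P.rep 0) = f p' / β i := by
      rw [hf, hgp, map_mul]; ring
    have ey : algebraMap K L g / β i * algebraMap K L (P.rep 1) = f q' / β i := by
      rw [hf, hgq, map_mul]; ring
    refine ⟨algebraMap K L g / β i, div_ne_zero ((map_ne_zero _).2 hg) (hβ0 i),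
      ⟨g ^ h / α i, ?_⟩, ?_⟩
    · rw [div_pow (algebraMap K L g), hβ, map_div₀, map_pow]
    · rw [ex, ey]
      refine ⟨hpI, hqI, ?_⟩
      have hαm : α i ∈ Ideal.span {p', q'} ^ (h - 1 + 1) := by
        rw [Nat.sub_add_cancel hpos, ← hspan, hα]
        exact Ideal.mem_span_singleton_self _
      obtain ⟨r, hr, s, hs, e⟩ := aux_span RSS f hRS_alg p' q' (β i) hpI hqI (h - 1) _ hαm
      refine ⟨r, hr, s, hs, ?_⟩
      rw [← e, Nat.sub_add_cancel hpos, hfα, div_self (pow_ne_zero _ (hβ0 i))]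
  choose c hc0 hck hcx hcy hc1 using main
  refine ⟨fun P => c P * algebraMap K L (P.rep 0), fun P => c P * algebraMap K L (P.rep 1),
    fun P => ⟨c P, hc0 P, rfl, rfl⟩, ?_, ?_, ?_⟩
  · intro P
    obtain ⟨k, hk⟩ := hck P
    exact ⟨⟨h, hpos, k * P.rep 0 ^ h, by rw [map_mul, map_pow, hk, mul_pow]⟩,
      ⟨h, hpos, k * P.rep 1 ^ h, by rw [map_mul, map_pow, hk, mul_pow]⟩⟩
  · intro P
    ext z
    constructor
    · rintro ⟨r, hr, s, hs, rfl⟩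
      exact RSS.add_mem (RSS.mul_mem (hcx P) hr) (RSS.mul_mem (hcy P) hs)
    · intro hz
      obtain ⟨r, hr, s, hs, e⟩ := hc1 P
      refine ⟨_, RSS.mul_mem hr hz, _, RSS.mul_mem hs hz, ?_⟩
      rw [← mul_assoc, ← mul_assoc, ← add_mul, ← e, one_mul]
  · intro P Q hPQ
    have e : c P * algebraMap K L (P.rep 0) * (c Q * algebraMap K L (Q.rep 1)) -
        c P * algebraMap K L (P.rep 1) * (c Q * algebraMap K L (Q.rep 0)) =
        c P * c Q * algebraMap K L (P.rep 0 * Q.rep 1 - P.rep 1 * Q.rep 0) := by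
      simp only [map_sub, map_mul]; ring
    simp only [e]
    obtain ⟨k, hk⟩ := hck P
    obtain ⟨k', hk'⟩ := hck Q
    refine ⟨mul_ne_zero (mul_ne_zero (hc0 P) (hc0 Q)) ((map_ne_zero _).2 ?_), h, hpos,
      k * k' * (P.rep 0 * Q.rep 1 - P.rep 1 * Q.rep 0) ^ h, ?_⟩
    · intro hdet
      apply hPQ
      rw [← P.mk_rep, ← Q.mk_rep, Projectivization.mk_eq_mk_iff']
      have hQ := Q.rep_nonzero
      by_cases h0 : Q.rep 0 = 0
      · have h1 : Q.rep 1 ≠ 0 := by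
          intro h1
          apply hQ
          funext j
          fin_cases j
          · exact h0
          · exact h1
        refine ⟨P.rep 1 / Q.rep 1, ?_⟩
        funext j
        fin_cases j
        · change P.rep 1 / Q.rep 1 * Q.rep 0 = P.rep 0
          field_simp
          linear_combination -hdet
        · change P.rep 1 / Q.rep 1 * Q.rep 1 = P.rep 1
          field_simp
      · refine ⟨P.rep 0 / Q.rep 0, ?_⟩
        funext j
        fin_cases j
        · change P.rep 0 / Q.rep 0 * Q.rep 0 = P.rep 0
          field_simp
        · change P.rep 0 / Q.rep 0 * Q.rep 1 = P.rep 1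
          field_simp
          linear_combination hdet
    · rw [map_mul, map_mul, map_pow, hk, hk', mul_pow, mul_pow]
end
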